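/- Let F be a Minkowski norm on ℝⁿ, let Ω ⊆ ℝⁿ be an open set with smooth boundary such that Ω^c is bounded, let 1 < p < n, and let u_p be the C¹ weak solution of div(F(∇u)^{p−1} F_ξ(∇u)) = F(∇u)^p in Ω with u_p = 0 on ∂Ω and u_p → +∞ at infinity. Let R > 0 be such that for every x ∈ ∂Ω there exists a Wulff shape W_R(x₀) ⊆ Ω^c with x ∈ ∂W_R(x₀). Then F(∇u_p(x)) ≤ (n−p)/R for every x in the closure of Ω. -/

import Mathlib

open MeasureTheory Filter Topology Metric Set
open scoped RealInnerProductSpace NNReal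

noncomputable section

abbrev En (n : ℕ) := EuclideanSpace ℝ (Fin n)

/-- A Minkowski norm on ℝⁿ: a norm (convex, even, 1-homogeneous, positive away from 0)
which is smooth away from the origin and whose Hessian of `F²/2` is positive definite
on `ℝⁿ \ {0}`. -/
structure MinkowskiNorm (n : ℕ) where
  F : En n → ℝ
  convexOn : ConvexOn ℝ Set.univ F
  even : ∀ ξ, F (-ξ) = F ξ
  homog : ∀ c : ℝ, 0 ≤ c → ∀ ξ, F (c • ξ) = c * F ξ
  pos : ∀ ξ : En n, ξ ≠ 0 → 0 < F ξ
  smooth : ContDiffOn ℝ (⊤ : ℕ∞) F {(0 : En n)}ᶜ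
  elliptic : ∀ ξ : En n, ξ ≠ 0 → ∀ v : En n, v ≠ 0 →
    0 < fderiv ℝ (fun x => fderiv ℝ (fun y => F y ^ 2 / 2) x) ξ v v

/-- Locally Lipschitz on a set (i.e. `C^{0,1}_loc`). -/
def LocLipOn {n : ℕ} (f : En n → ℝ) (s : Set (En n)) : Prop :=
  ∀ x ∈ s, ∃ (K : ℝ≥0) (t : Set (En n)), t ∈ nhdsWithin x s ∧ LipschitzOnWith K f t

/-- Weak solution of `div(F_ξ(∇u)) = F(∇u)` in `Ω` in the sense of Huisken–Ilmanen's
minimization principle. -/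
def IsWeakSolIAMCF {n : ℕ} (N : MinkowskiNorm n) (Ω : Set (En n)) (u : En n → ℝ) : Prop :=
  LocLipOn u Ω ∧
  ∀ K : Set (En n), IsCompact (closure K) → closure K ⊆ Ω →
    ∀ φ : En n → ℝ, LocLipOn φ Ω → (∀ x ∈ Ω \ K, φ x = u x) →
      (∫ x in K, (N.F (gradient u x) + u x * N.F (gradient u x))) ≤
        ∫ x in K, (N.F (gradient φ x) + φ x * N.F (gradient u x))

/-- Weak subsolution: the minimization inequality holds for competitors `φ ≤ u`. -/
def IsWeakSubSolIAMCF {n : ℕ} (N : MinkowskiNorm n) (Ω : Set (En n)) (u : En n → ℝ) : Prop :=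
  LocLipOn u Ω ∧
  ∀ K : Set (En n), IsCompact (closure K) → closure K ⊆ Ω →
    ∀ φ : En n → ℝ, LocLipOn φ Ω → (∀ x ∈ Ω \ K, φ x = u x) → (∀ x ∈ Ω, φ x ≤ u x) →
      (∫ x in K, (N.F (gradient u x) + u x * N.F (gradient u x))) ≤
        ∫ x in K, (N.F (gradient φ x) + φ x * N.F (gradient u x))

/-- Weak supersolution: the minimization inequality holds for competitors `φ ≥ u`. -/
def IsWeakSuperSolIAMCF {n : ℕ} (N : MinkowskiNorm n) (Ω : Set (En n)) (u : En n → ℝ) : Prop :=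
  LocLipOn u Ω ∧
  ∀ K : Set (En n), IsCompact (closure K) → closure K ⊆ Ω →
    ∀ φ : En n → ℝ, LocLipOn φ Ω → (∀ x ∈ Ω \ K, φ x = u x) → (∀ x ∈ Ω, u x ≤ φ x) →
      (∫ x in K, (N.F (gradient u x) + u x * N.F (gradient u x))) ≤
        ∫ x in K, (N.F (gradient φ x) + φ x * N.F (gradient u x))

/-- A smooth compactly supported test function on `Ω`. -/
def IsTestFun {n : ℕ} (Ω : Set (En n)) (ψ : En n → ℝ) : Prop :=
  ContDiff ℝ (⊤ : ℕ∞) ψ ∧ HasCompactSupport ψ ∧ tsupport ψ ⊆ Ω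

/-- Weak solution of the Finsler `p`-Laplace equation `div(F(∇v)^{p-1} F_ξ(∇v)) = 0` in `Ω`. -/
def IsWeakPHarmonic {n : ℕ} (N : MinkowskiNorm n) (Ω : Set (En n)) (p : ℝ)
    (v : En n → ℝ) : Prop :=
  ∀ ψ : En n → ℝ, IsTestFun Ω ψ →
    (∫ x in Ω, N.F (gradient v x) ^ (p - 1) *
      ⟪gradient N.F (gradient v x), gradient ψ x⟫) = 0

/-- Weak solution of `div(F(∇u)^{p-1} F_ξ(∇u)) = F(∇u)^p` in `Ω`. -/
def IsWeakPSol {n : ℕ} (N : MinkowskiNorm n) (Ω : Set (En n)) (p : ℝ)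
    (u : En n → ℝ) : Prop :=
  ∀ ψ : En n → ℝ, IsTestFun Ω ψ →
    (∫ x in Ω, N.F (gradient u x) ^ (p - 1) *
      ⟪gradient N.F (gradient u x), gradient ψ x⟫) =
      - ∫ x in Ω, N.F (gradient u x) ^ p * ψ x

/-- The polar (dual) norm `F^o(x) = sup_{ξ ≠ 0} ⟨ξ, x⟩ / F(ξ)`. -/
def polarF {n : ℕ} (N : MinkowskiNorm n) (x : En n) : ℝ :=
  sSup {c : ℝ | ∃ ξ : En n, ξ ≠ 0 ∧ c = ⟪ξ, x⟫ / N.F ξ}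

/-- The Wulff shape of radius `r` centered at `x₀`: `{x : F^o(x - x₀) < r}`. -/
def Wulff {n : ℕ} (N : MinkowskiNorm n) (r : ℝ) (x₀ : En n) : Set (En n) :=
  {x | polarF N (x - x₀) < r}

/-- `Ω` is an open set with smooth boundary: it is a smooth sublevel set of a smooth
function with nonvanishing gradient on the boundary. -/
def HasSmoothBoundary {n : ℕ} (Ω : Set (En n)) : Prop :=
  ∃ f : En n → ℝ, ContDiff ℝ (⊤ : ℕ∞) f ∧ Ω = {x | f x < 0} ∧
    ∀ x ∈ frontier Ω, fderiv ℝ f x ≠ 0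

/-- `C¹` on `s` with locally Hölder continuous gradient (i.e. `C^{1,α}_loc`). -/
def C1LocHolderOn {n : ℕ} (v : En n → ℝ) (s : Set (En n)) : Prop :=
  ContDiffOn ℝ 1 v s ∧
  ∀ x ∈ s, ∃ (α C : ℝ≥0), 0 < α ∧ (α : ℝ) ≤ 1 ∧
    ∃ t ∈ nhdsWithin x s, HolderOnWith C α (fun y => gradient v y) t

/-- Divergence of a vector field on `ℝⁿ`. -/
def divg {n : ℕ} (V : En n → En n) (x : En n) : ℝ :=
  ∑ i : Fin n, fderiv ℝ V x (EuclideanSpace.single i 1) i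

/-- A one-sided linear bound on the growth of `f` along a ray bounds the directional derivative. -/
lemma fderiv_apply_le_of_eventually {E : Type*} [NormedAddCommGroup E] [NormedSpace ℝ E]
    {f : E → ℝ} {x v : E} {M : ℝ} (hf : DifferentiableAt ℝ f x)
    (h : ∀ᶠ t : ℝ in 𝓝[>] 0, f (x + t • v) - f x ≤ t * M) : fderiv ℝ f x v ≤ M := by
  have h1 := (hf.hasFDerivAt.hasLineDerivAt v).tendsto_slope_zero_right
  refine le_of_tendsto h1 ?_
  filter_upwards [h, self_mem_nhdsWithin] with t ht ht0
  have ht0 : 0 < t := ht0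
  rw [smul_eq_mul, inv_mul_le_iff₀ ht0]
  exact ht

/-- The second derivative vanishes along a segment on which the function is constant. -/
lemma fderiv_fderiv_apply_eq_zero_of_constant_on_segment {E : Type*} [NormedAddCommGroup E]
    [NormedSpace ℝ E] {H : E → ℝ} {x v : E} {C m : ℝ} (hm : m ∈ Ioo (0 : ℝ) 1)
    (hH : ∀ t ∈ Icc (0 : ℝ) 1, ContDiffAt ℝ 2 H (x + t • v))
    (hC : ∀ t ∈ Icc (0 : ℝ) 1, H (x + t • v) = C) :
    fderiv ℝ (fderiv ℝ H) (x + m • v) v v = 0 := by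
  have hline : ∀ t : ℝ, HasDerivAt (fun s : ℝ => x + s • v) v t := fun t => by
    simpa using ((hasDerivAt_id t).smul_const v).const_add x
  have hd1 : ∀ t ∈ Ioo (0 : ℝ) 1, fderiv ℝ H (x + t • v) v = 0 := by
    intro t ht
    have h1 := ((hH t (Ioo_subset_Icc_self ht)).differentiableAt
      two_ne_zero).hasFDerivAt.comp_hasDerivAt t (hline t)
    have h2 : (H ∘ fun s : ℝ => x + s • v) =ᶠ[𝓝 t] fun _ => C := by
      filter_upwards [Icc_mem_nhds ht.1 ht.2] with s hs
      exact hC s hs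
    exact h1.unique ((hasDerivAt_const t C).congr_of_eventuallyEq h2)
  have hd2 : DifferentiableAt ℝ (fderiv ℝ H) (x + m • v) :=
    ((hH m (Ioo_subset_Icc_self hm)).fderiv_right (m := 1) one_add_one_eq_two.le).differentiableAt
      one_ne_zero
  have h0 : HasDerivAt (fun s : ℝ => fderiv ℝ H (x + s • v)) (fderiv ℝ (fderiv ℝ H) (x + m • v) v)
      m := HasFDerivAt.comp_hasDerivAt m hd2.hasFDerivAt (hline m)
  have h1 : HasDerivAt (fun s : ℝ => fderiv ℝ H (x + s • v) v)
      (fderiv ℝ (fderiv ℝ H) (x + m • v) v v) m :=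
    HasFDerivAt.comp_hasDerivAt m (ContinuousLinearMap.apply ℝ ℝ v).hasFDerivAt h0
  have h2 : (fun s : ℝ => fderiv ℝ H (x + s • v) v) =ᶠ[𝓝 m] fun _ => (0 : ℝ) := by
    filter_upwards [Ioo_mem_nhds hm.1 hm.2] with s hs
    exact hd1 s hs
  exact h1.unique ((hasDerivAt_const m (0 : ℝ)).congr_of_eventuallyEq h2)

namespace MinkowskiNorm

variable {n : ℕ} (N : MinkowskiNorm n)

lemma F_zero : N.F 0 = 0 := by simpa using N.homog 0 le_rfl 0

lemma F_nonneg (ξ : En n) : 0 ≤ N.F ξ := by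
  rcases eq_or_ne ξ 0 with rfl | h
  · exact N.F_zero.ge
  · exact (N.pos ξ h).le

lemma F_add_le (ξ η : En n) : N.F (ξ + η) ≤ N.F ξ + N.F η := by
  have h := N.convexOn.2 (mem_univ ((2 : ℝ) • ξ)) (mem_univ ((2 : ℝ) • η))
    (by norm_num : (0 : ℝ) ≤ 1 / 2) (by norm_num : (0 : ℝ) ≤ 1 / 2) (by norm_num)
  rw [smul_smul, smul_smul, N.homog 2 (by norm_num), N.homog 2 (by norm_num)] at h
  norm_num at h
  linarith

lemma continuous_F : Continuous N.F :=
  continuousOn_univ.1 (N.convexOn.continuousOn isOpen_univ)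

lemma exists_F_le : ∃ C : ℝ, 0 < C ∧ ∀ ξ, N.F ξ ≤ C * ‖ξ‖ := by
  obtain ⟨C, hC⟩ := (isCompact_sphere (0 : En n) 1).exists_bound_of_continuousOn
    N.continuous_F.continuousOn
  refine ⟨max C 1, by positivity, fun ξ => ?_⟩
  rcases eq_or_ne ξ 0 with rfl | h
  · simp [N.F_zero]
  have h0 : 0 < ‖ξ‖ := norm_pos_iff.2 h
  have h1 := (le_abs_self _).trans (hC (‖ξ‖⁻¹ • ξ) (by simp [norm_smul, h0.ne']))
  rw [N.homog _ (by positivity), inv_mul_le_iff₀ h0, mul_comm] at h1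
  exact h1.trans (by gcongr; exact le_max_left _ _)

lemma exists_le_F : ∃ c : ℝ, 0 < c ∧ ∀ ξ, c * ‖ξ‖ ≤ N.F ξ := by
  obtain ⟨C, hC⟩ := (isCompact_sphere (0 : En n) 1).exists_bound_of_continuousOn
    (f := fun ξ => (N.F ξ)⁻¹)
    (N.continuous_F.continuousOn.inv₀ fun ξ hξ =>
      (N.pos ξ (by rintro rfl; simp at hξ)).ne')
  refine ⟨(max C 1)⁻¹, by positivity, fun ξ => ?_⟩
  rcases eq_or_ne ξ 0 with rfl | h
  · simp [N.F_zero]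
  have h0 : 0 < ‖ξ‖ := norm_pos_iff.2 h
  have h1 := (le_abs_self _).trans (hC (‖ξ‖⁻¹ • ξ) (by simp [norm_smul, h0.ne']))
  rw [N.homog _ (by positivity), mul_inv, inv_inv] at h1
  rw [inv_mul_le_iff₀ (by positivity)]
  have h2 := N.pos ξ h
  have h3 : ‖ξ‖ ≤ C * N.F ξ := by
    rwa [← div_eq_mul_inv, div_le_iff₀ h2] at h1
  exact h3.trans (by gcongr; exact le_max_left _ _)

lemma contDiffAt_F {ξ : En n} (h : ξ ≠ 0) : ContDiffAt ℝ (⊤ : ℕ∞) N.F ξ :=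
  N.smooth.contDiffAt (isOpen_compl_singleton.mem_nhds h)

lemma differentiableAt_F {ξ : En n} (h : ξ ≠ 0) : DifferentiableAt ℝ N.F ξ :=
  (N.contDiffAt_F h).differentiableAt (by simp)

lemma inner_gradient_le {ξ : En n} (h : ξ ≠ 0) (η : En n) : ⟪gradient N.F ξ, η⟫ ≤ N.F η := by
  rw [inner_gradient_left]
  refine fderiv_apply_le_of_eventually (N.differentiableAt_F h) ?_
  filter_upwards [self_mem_nhdsWithin] with t ht
  have := N.F_add_le ξ (t • η)
  rw [N.homog t (le_of_lt ht)] at this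
  linarith

lemma inner_gradient_self {ξ : En n} (h : ξ ≠ 0) : ⟪gradient N.F ξ, ξ⟫ = N.F ξ := by
  refine le_antisymm (N.inner_gradient_le h ξ) ?_
  rw [← neg_le_neg_iff, ← inner_neg_right, inner_gradient_left]
  refine fderiv_apply_le_of_eventually (N.differentiableAt_F h) ?_
  filter_upwards [Ioo_mem_nhdsGT (zero_lt_one' ℝ)] with t ht
  have : ξ + t • -ξ = (1 - t) • ξ := by module
  rw [this, N.homog _ (by linarith [ht.2])]
  linarith

lemma gradient_smul {ξ : En n} (h : ξ ≠ 0) {c : ℝ} (hc : 0 < c) :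
    gradient N.F (c • ξ) = gradient N.F ξ := by
  have h1 : HasFDerivAt N.F (fderiv ℝ N.F (c • ξ)) (c • ξ) :=
    (N.differentiableAt_F (smul_ne_zero hc.ne' h)).hasFDerivAt
  have h2 := h1.comp ξ ((hasFDerivAt_id ξ).const_smul c)
  have h3 : (N.F ∘ HSMul.hSMul c : En n → ℝ) = fun ξ => c * N.F ξ := by
    funext η; simp [N.homog c hc.le]
  rw [h3] at h2
  have h4 := h2.unique ((N.differentiableAt_F h).hasFDerivAt.const_mul c)
  refine ext_inner_right ℝ fun v => ?_
  rw [inner_gradient_left, inner_gradient_left]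
  have h5 := DFunLike.congr_fun h4 v
  simp at h5
  exact h5.resolve_right hc.ne'

lemma gradient_neg (ξ : En n) : gradient N.F (-ξ) = -gradient N.F ξ := by
  have h1 := fderiv_comp_smul (𝕜 := ℝ) (f := N.F) (c := (-1 : ℝ)) (x := ξ)
  simp only [neg_smul, one_smul, N.even] at h1
  rw [gradient, gradient, h1, map_neg, neg_neg]

lemma not_constant_on_segment {ξ v : En n} {M : ℝ} (hv0 : v ≠ 0)
    (hne0 : ∀ t ∈ Icc (0 : ℝ) 1, ξ + t • v ≠ 0)
    (hconst : ∀ t ∈ Icc (0 : ℝ) 1, N.F (ξ + t • v) = M) : False := by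
  have hm : (1 / 2 : ℝ) ∈ Ioo (0 : ℝ) 1 := by constructor <;> norm_num
  refine (N.elliptic _ (hne0 _ (Ioo_subset_Icc_self hm)) v hv0).ne' ?_
  refine fderiv_fderiv_apply_eq_zero_of_constant_on_segment (C := M ^ 2 / 2) hm (fun t ht => ?_)
    fun t ht => ?_
  · exact ((N.contDiffAt_F (hne0 t ht)).of_le (by norm_cast)).pow 2 |>.div_const 2
  · simp only [hconst t ht]

lemma eq_of_inner_gradient_eq {ξ η : En n} (hξ : ξ ≠ 0) (hF : N.F ξ = N.F η)
    (h : ⟪gradient N.F ξ, η⟫ = N.F η) : ξ = η := by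
  by_contra hne
  set v := η - ξ with hv
  have hv0 : v ≠ 0 := sub_ne_zero.2 (Ne.symm hne)
  have hconst : ∀ t ∈ Icc (0 : ℝ) 1, N.F (ξ + t • v) = N.F ξ := by
    intro t ht
    apply le_antisymm
    · have : ξ + t • v = (1 - t) • ξ + t • η := by rw [hv]; module
      rw [this]
      have := N.F_add_le ((1 - t) • ξ) (t • η)
      rw [N.homog _ (by linarith [ht.2]), N.homog _ ht.1, ← hF] at this
      linarith
    · have := N.inner_gradient_le hξ (ξ + t • v)
      rw [inner_add_right, N.inner_gradient_self hξ, inner_smul_right, hv, inner_sub_right, h,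
        N.inner_gradient_self hξ, hF] at this
      rw [hF, hv]
      linarith
  have hpos := N.pos ξ hξ
  have hne0 : ∀ t ∈ Icc (0 : ℝ) 1, ξ + t • v ≠ 0 := by
    intro t ht h0
    have := hconst t ht
    rw [h0, N.F_zero] at this
    exact hpos.ne this
  exact N.not_constant_on_segment hv0 hne0 hconst

/-- The flux `F(ξ)^{p-1} F_ξ(ξ)` of the Finsler `p`-Laplacian. -/
def flux (p : ℝ) (ξ : En n) : En n := N.F ξ ^ (p - 1) • gradient N.F ξ

variable {p : ℝ}

lemma flux_zero (hp : 1 < p) : N.flux p 0 = 0 := by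
  simp [flux, N.F_zero, Real.zero_rpow (sub_pos.2 hp).ne']

lemma flux_neg (ξ : En n) : N.flux p (-ξ) = -N.flux p ξ := by
  simp [flux, N.even, N.gradient_neg]

lemma flux_smul (hp : 1 < p) {c : ℝ} (hc : 0 < c) (ξ : En n) :
    N.flux p (c • ξ) = c ^ (p - 1) • N.flux p ξ := by
  rcases eq_or_ne ξ 0 with rfl | h
  · simp [N.flux_zero hp]
  · rw [flux, flux, N.gradient_smul h hc, N.homog c hc.le,
      Real.mul_rpow hc.le (N.F_nonneg ξ), smul_smul]

lemma inner_flux_self (hp : 1 < p) (ξ : En n) : ⟪N.flux p ξ, ξ⟫ = N.F ξ ^ p := by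
  rcases eq_or_ne ξ 0 with rfl | h
  · simp [N.F_zero, Real.zero_rpow (by linarith : p ≠ 0)]
  · rw [flux, real_inner_smul_left, N.inner_gradient_self h]
    nth_rw 2 [← Real.rpow_one (N.F ξ)]
    rw [← Real.rpow_add (N.pos ξ h), sub_add_cancel]

lemma continuous_flux (hp : 1 < p) : Continuous (N.flux p) := by
  have hp' : 0 < p - 1 := sub_pos.2 hp
  refine continuous_iff_continuousAt.2 fun ξ => ?_
  rcases eq_or_ne ξ 0 with rfl | h
  · obtain ⟨C, hC, hC'⟩ := N.exists_F_le
    rw [ContinuousAt, N.flux_zero hp]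
    have hb : ∀ η : En n, ‖N.flux p η‖ ≤ N.F η ^ (p - 1) * C := by
      intro η
      rcases eq_or_ne η 0 with rfl | h
      · simp [N.flux_zero hp, N.F_zero, Real.zero_rpow hp'.ne']
      rw [flux, norm_smul, Real.norm_of_nonneg (Real.rpow_nonneg (N.F_nonneg η) _)]
      refine mul_le_mul_of_nonneg_left ?_ (Real.rpow_nonneg (N.F_nonneg η) _)
      have h1 := (N.inner_gradient_le h (gradient N.F η)).trans (hC' _)
      rw [real_inner_self_eq_norm_sq] at h1
      rcases (norm_nonneg (gradient N.F η)).eq_or_lt with h2 | h2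
      · rw [← h2]; exact hC.le
      · nlinarith
    refine squeeze_zero_norm hb ?_
    have : Continuous fun η => N.F η ^ (p - 1) * C :=
      (N.continuous_F.rpow_const fun _ => Or.inr hp'.le).mul_const C
    simpa [N.F_zero, Real.zero_rpow hp'.ne'] using this.tendsto 0
  · refine ContinuousAt.smul (N.continuous_F.continuousAt.rpow_const (Or.inr hp'.le)) ?_
    exact (InnerProductSpace.toDual ℝ (En n)).symm.continuous.continuousAt.comp
      (((N.contDiffAt_F h).fderiv_right (m := 0) (by norm_cast)).continuousAt)

lemma inner_flux_le (hp : 1 < p) (ξ η : En n) :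
    ⟪N.flux p ξ, η⟫ ≤ N.F ξ ^ (p - 1) * N.F η := by
  rcases eq_or_ne ξ 0 with rfl | h
  · simp [N.flux_zero hp, N.F_zero, Real.zero_rpow (sub_pos.2 hp).ne']
  · rw [flux, real_inner_smul_left]
    exact mul_le_mul_of_nonneg_left (N.inner_gradient_le h η) (Real.rpow_nonneg (N.F_nonneg ξ) _)

lemma flux_strictMono (hp : 1 < p) {ξ η : En n} (hne : ξ ≠ η) :
    0 < ⟪N.flux p ξ - N.flux p η, ξ - η⟫ := by
  have hp' : 0 < p - 1 := sub_pos.2 hp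
  have hpow : ∀ a : ℝ, 0 ≤ a → a ^ p = a ^ (p - 1) * a := by
    intro a ha
    nth_rw 3 [← Real.rpow_one a]
    rw [← Real.rpow_add_of_nonneg ha hp'.le zero_le_one, sub_add_cancel]
  have ha := N.F_nonneg ξ
  have hb := N.F_nonneg η
  have e : ⟪N.flux p ξ - N.flux p η, ξ - η⟫ = N.F ξ ^ p + N.F η ^ p
      - ⟪N.flux p ξ, η⟫ - ⟪N.flux p η, ξ⟫ := by
    simp only [inner_sub_left, inner_sub_right, N.inner_flux_self hp]; ring
  have h1 := N.inner_flux_le hp ξ η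
  have h2 := N.inner_flux_le hp η ξ
  rw [e, hpow _ ha, hpow _ hb]
  rcases lt_trichotomy (N.F ξ) (N.F η) with h | h | h
  · have := Real.rpow_lt_rpow ha h hp'
    nlinarith [mul_pos (sub_pos.2 h) (sub_pos.2 this)]
  · have hξ : ξ ≠ 0 := by
      rintro rfl
      refine hne (by_contra fun h0 => (N.pos η (Ne.symm h0)).ne ?_)
      rw [← h, N.F_zero]
    have h3 : ⟪N.flux p ξ, η⟫ < N.F ξ ^ (p - 1) * N.F η := by
      rw [flux, real_inner_smul_left]
      refine mul_lt_mul_of_pos_left ((N.inner_gradient_le hξ η).lt_of_ne fun h4 =>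
        hne (N.eq_of_inner_gradient_eq hξ h h4)) (Real.rpow_pos_of_pos (N.pos ξ hξ) _)
    rw [h] at h1 h3 ⊢
    rw [h] at h2
    linarith
  · have := Real.rpow_lt_rpow hb h hp'
    nlinarith [mul_pos (sub_pos.2 h) (sub_pos.2 this)]

lemma polarF_le {x : En n} {M : ℝ} (hM : 0 ≤ M) (h : ∀ ξ : En n, ⟪ξ, x⟫ ≤ N.F ξ * M) :
    polarF N x ≤ M := by
  refine Real.sSup_le ?_ hM
  rintro _ ⟨ξ, hξ, rfl⟩
  rw [div_le_iff₀ (N.pos ξ hξ), mul_comm]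
  exact h ξ

lemma exists_polarF_le_norm : ∃ K : ℝ≥0, ∀ x : En n, (∀ ξ : En n, ⟪ξ, x⟫ ≤ N.F ξ * polarF N x) ∧
    polarF N x ≤ K * ‖x‖ := by
  obtain ⟨c, hc, hF⟩ := N.exists_le_F
  have hb : ∀ ξ x : En n, ⟪ξ, x⟫ ≤ N.F ξ * (c⁻¹ * ‖x‖) := by
    intro ξ x
    calc ⟪ξ, x⟫ ≤ ‖ξ‖ * ‖x‖ := real_inner_le_norm ξ x
      _ = (c * ‖ξ‖) * (c⁻¹ * ‖x‖) := by field_simp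
      _ ≤ _ := by gcongr; exact hF ξ
  refine ⟨⟨c⁻¹, by positivity⟩, fun x => ⟨fun ξ => ?_,
    N.polarF_le (mul_nonneg (inv_pos.2 hc).le (norm_nonneg x)) (hb · x)⟩⟩
  rcases eq_or_ne ξ 0 with rfl | h
  · simp [N.F_zero]
  rw [mul_comm, ← div_le_iff₀ (N.pos ξ h)]
  refine le_csSup ⟨c⁻¹ * ‖x‖, ?_⟩ ⟨ξ, h, rfl⟩
  rintro _ ⟨η, hη, rfl⟩
  rw [div_le_iff₀ (N.pos η hη), mul_comm]
  exact hb η x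

lemma inner_le_mul_polarF (ξ x : En n) : ⟪ξ, x⟫ ≤ N.F ξ * polarF N x :=
  (N.exists_polarF_le_norm.choose_spec x).1 ξ

lemma polarF_pos {x : En n} (h : x ≠ 0) : 0 < polarF N x := by
  have h1 := N.inner_le_mul_polarF x x
  rw [real_inner_self_eq_norm_sq] at h1
  have h2 : 0 < ‖x‖ ^ 2 := by have := norm_pos_iff.2 h; positivity
  exact pos_of_mul_pos_right (h2.trans_le h1) (N.F_nonneg x)

lemma polarF_zero : polarF N (0 : En n) = 0 := by
  refine le_antisymm (N.polarF_le le_rfl (by simp)) (Real.sSup_nonneg ?_)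
  rintro _ ⟨ξ, -, rfl⟩
  simp

lemma polarF_nonneg (x : En n) : 0 ≤ polarF N x := by
  rcases eq_or_ne x 0 with rfl | h
  · exact N.polarF_zero.ge
  · exact (N.polarF_pos h).le

lemma polarF_add_le (x y : En n) : polarF N (x + y) ≤ polarF N x + polarF N y := by
  refine N.polarF_le (add_nonneg (N.polarF_nonneg x) (N.polarF_nonneg y)) fun ξ => ?_
  rw [inner_add_right, mul_add]
  exact add_le_add (N.inner_le_mul_polarF ξ x) (N.inner_le_mul_polarF ξ y)

lemma polarF_smul_le {t : ℝ} (ht : 0 ≤ t) (x : En n) : polarF N (t • x) ≤ t * polarF N x := by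
  refine N.polarF_le (mul_nonneg ht (N.polarF_nonneg x)) fun ξ => ?_
  rw [inner_smul_right, mul_left_comm]
  exact mul_le_mul_of_nonneg_left (N.inner_le_mul_polarF ξ x) ht

lemma continuous_polarF : Continuous (polarF N) := by
  obtain ⟨K, hK⟩ := N.exists_polarF_le_norm
  refine (LipschitzWith.of_le_add_mul K fun x y => ?_).continuous
  have h1 := N.polarF_add_le y (x - y)
  rw [add_sub_cancel] at h1
  rw [dist_eq_norm]
  exact h1.trans (by gcongr; exact (hK _).2)

lemma tendsto_polarF : Tendsto (polarF N) (cocompact (En n)) atTop := by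
  obtain ⟨C, hC, hF⟩ := N.exists_F_le
  have h1 : ∀ x : En n, C⁻¹ * ‖x‖ ≤ polarF N x := by
    intro x
    rcases eq_or_ne x 0 with rfl | h
    · simp [N.polarF_zero]
    have h0 := norm_pos_iff.2 h
    have h2 := N.inner_le_mul_polarF x x
    rw [real_inner_self_eq_norm_sq] at h2
    have h3 : ‖x‖ * ‖x‖ ≤ ‖x‖ * (C * polarF N x) := by
      nlinarith [mul_le_mul_of_nonneg_right (hF x) (N.polarF_nonneg x)]
    rw [inv_mul_le_iff₀ hC]
    exact le_of_mul_le_mul_left h3 h0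
  exact tendsto_atTop_mono h1 ((tendsto_norm_cocompact_atTop (E := En n)).const_mul_atTop
    (inv_pos.2 hC))

lemma isCompact_F_eq_one : IsCompact {ξ : En n | N.F ξ = 1} := by
  obtain ⟨c, hc, hF⟩ := N.exists_le_F
  refine isCompact_of_isClosed_isBounded (isClosed_eq N.continuous_F continuous_const) ?_
  refine isBounded_iff_forall_norm_le.2 ⟨c⁻¹, fun ξ hξ => ?_⟩
  have h := hF ξ
  rw [mem_ofPred_eq] at hξ
  rw [hξ] at h
  rwa [inv_eq_one_div, le_div_iff₀ hc, mul_comm]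

lemma exists_polarF_eq {x : En n} (h : x ≠ 0) : ∃ ξ : En n, N.F ξ = 1 ∧ ⟪ξ, x⟫ = polarF N x := by
  have hx := N.pos x h
  have hne : {ξ : En n | N.F ξ = 1}.Nonempty :=
    ⟨(N.F x)⁻¹ • x, by rw [mem_ofPred_eq, N.homog _ (by positivity), inv_mul_cancel₀ hx.ne']⟩
  obtain ⟨ξ, hξ, hmax⟩ := N.isCompact_F_eq_one.exists_isMaxOn hne
    (f := fun ξ => ⟪ξ, x⟫) (by fun_prop)
  have hle : ∀ η : En n, ⟪η, x⟫ ≤ N.F η * ⟪ξ, x⟫ := by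
    intro η
    rcases eq_or_ne η 0 with rfl | hη
    · simp [N.F_zero]
    have hη' := N.pos η hη
    have h1 : ⟪(N.F η)⁻¹ • η, x⟫ ≤ ⟪ξ, x⟫ := hmax (a := (N.F η)⁻¹ • η)
      (by rw [mem_ofPred_eq, N.homog _ (by positivity), inv_mul_cancel₀ hη'.ne'])
    rwa [real_inner_smul_left, inv_mul_le_iff₀ hη'] at h1
  refine ⟨ξ, hξ, le_antisymm ?_ (N.polarF_le ?_ hle)⟩
  · simpa [show N.F ξ = 1 from hξ] using N.inner_le_mul_polarF ξ x
  · have h1 := hle x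
    rw [real_inner_self_eq_norm_sq] at h1
    exact nonneg_of_mul_nonneg_right ((sq_nonneg _).trans h1) hx

lemma smul_gradient_eq {x ξ : En n} (hξ : N.F ξ = 1) (h : ⟪ξ, x⟫ = polarF N x) :
    polarF N x • gradient N.F ξ = x := by
  have hξ0 : ξ ≠ 0 := by rintro rfl; simp [N.F_zero] at hξ
  have hmin : IsLocalMin (fun η : En n => polarF N x * N.F η - ⟪x, η⟫) ξ := by
    refine Eventually.of_forall fun η => ?_
    have := N.inner_le_mul_polarF η x
    have h' := h
    rw [real_inner_comm] at this h'
    simp only [hξ]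
    linarith
  have hd := ((N.differentiableAt_F hξ0).hasFDerivAt.const_mul (polarF N x)).sub
    (innerSL ℝ x).hasFDerivAt
  have h0 := hmin.hasFDerivAt_eq_zero hd
  refine ext_inner_right ℝ fun v => ?_
  have h1 := DFunLike.congr_fun h0 v
  simp only [sub_apply, smul_apply, smul_eq_mul,
    innerSL_apply_apply, zero_apply] at h1
  rw [real_inner_smul_left, inner_gradient_left]
  linarith

lemma eq_of_polarF_eq {x ξ η : En n} (hx : x ≠ 0) (hξ : N.F ξ = 1) (h : ⟪ξ, x⟫ = polarF N x)
    (hη : N.F η = 1) (h' : ⟪η, x⟫ = polarF N x) : ξ = η := by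
  have hξ0 : ξ ≠ 0 := by rintro rfl; simp [N.F_zero] at hξ
  refine N.eq_of_inner_gradient_eq hξ0 (hξ.trans hη.symm) ?_
  have h1 := N.smul_gradient_eq hξ h
  have h2 : polarF N x * ⟪gradient N.F ξ, η⟫ = polarF N x := by
    rw [← real_inner_smul_left, h1, real_inner_comm, h']
  rw [hη]
  exact mul_left_cancel₀ (N.polarF_pos hx).ne' (h2.trans (mul_one _).symm)

/-- The point of `{F = 1}` at which the supremum defining the polar is attained. -/
def polarDual (x : En n) : En n :=
  open Classical in if h : x ≠ 0 then (N.exists_polarF_eq h).choose else 0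

lemma F_polarDual {x : En n} (h : x ≠ 0) : N.F (N.polarDual x) = 1 := by
  rw [polarDual, dif_pos h]
  exact (N.exists_polarF_eq h).choose_spec.1

lemma inner_polarDual {x : En n} (h : x ≠ 0) : ⟪N.polarDual x, x⟫ = polarF N x := by
  rw [polarDual, dif_pos h]
  exact (N.exists_polarF_eq h).choose_spec.2

lemma continuousAt_polarDual {x : En n} (h : x ≠ 0) : ContinuousAt N.polarDual x := by
  have hev : ∀ᶠ y in 𝓝 x, y ≠ 0 := isOpen_compl_singleton.mem_nhds h
  refine N.isCompact_F_eq_one.tendsto_nhds_of_unique_mapClusterPt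
    (hev.mono fun y hy => N.F_polarDual hy) fun ξ hξ hcl => ?_
  obtain ⟨U, hU, hUt⟩ := mapClusterPt_iff_ultrafilter.1 hcl
  refine N.eq_of_polarF_eq h hξ ?_ (N.F_polarDual h) (N.inner_polarDual h)
  have h1 : Tendsto (fun y => ⟪N.polarDual y, y⟫) U (𝓝 ⟪ξ, x⟫) :=
    hUt.inner (tendsto_id.mono_left hU)
  have h2 : Tendsto (polarF N) U (𝓝 (polarF N x)) := N.continuous_polarF.continuousAt.mono_left hU
  refine tendsto_nhds_unique (h1.congr' ?_) h2
  exact (hev.filter_mono hU).mono fun y hy => N.inner_polarDual hy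

lemma hasGradientAt_polarF {x : En n} (h : x ≠ 0) :
    HasGradientAt (polarF N) (N.polarDual x) x := by
  rw [hasGradientAt_iff_isLittleO]
  have hev : ∀ᶠ y in 𝓝 x, y ≠ 0 := isOpen_compl_singleton.mem_nhds h
  refine Asymptotics.isLittleO_iff.2 fun c hc => ?_
  filter_upwards [hev, Metric.tendsto_nhds.1 (N.continuousAt_polarDual h) c hc] with y hy hyc
  have h1 : ⟪N.polarDual x, y - x⟫ ≤ polarF N y - polarF N x := by
    have := N.inner_le_mul_polarF (N.polarDual x) y
    rw [N.F_polarDual h] at this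
    rw [inner_sub_right, N.inner_polarDual h]
    linarith
  have h2 : polarF N y - polarF N x ≤ ⟪N.polarDual y, y - x⟫ := by
    have := N.inner_le_mul_polarF (N.polarDual y) x
    rw [N.F_polarDual hy] at this
    rw [inner_sub_right, N.inner_polarDual hy]
    linarith
  have h3 : ⟪N.polarDual y, y - x⟫ - ⟪N.polarDual x, y - x⟫ ≤ c * ‖y - x‖ := by
    rw [← inner_sub_left]
    refine (real_inner_le_norm _ _).trans ?_
    gcongr
    rw [← dist_eq_norm]
    exact hyc.le
  rw [Real.norm_eq_abs, abs_of_nonneg (by linarith)]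
  linarith

lemma contDiffOn_polarF : ContDiffOn ℝ 1 (polarF N) {(0 : En n)}ᶜ := by
  have h := contDiffOn_succ_iff_fderiv_of_isOpen (𝕜 := ℝ) (n := 0) (f := polarF N)
    (isOpen_compl_singleton (x := (0 : En n)))
  rw [zero_add] at h
  refine h.2 ⟨fun x hx => (N.hasGradientAt_polarF hx).differentiableAt.differentiableWithinAt,
    by simp, contDiffOn_zero.2 fun x hx => ContinuousAt.continuousWithinAt ?_⟩
  have h1 : fderiv ℝ (polarF N) =ᶠ[𝓝 x]
      fun y => InnerProductSpace.toDual ℝ (En n) (N.polarDual y) := by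
    filter_upwards [isOpen_compl_singleton.mem_nhds hx] with y hy
    exact (hasGradientAt_iff_hasFDerivAt.1 (N.hasGradientAt_polarF hy)).fderiv
  refine ContinuousAt.congr ?_ h1.symm
  exact (InnerProductSpace.toDual ℝ (En n)).continuous.continuousAt.comp
    (N.continuousAt_polarDual hx)

lemma gradient_F_polarDual {x : En n} (h : x ≠ 0) :
    gradient N.F (N.polarDual x) = (polarF N x)⁻¹ • x := by
  have h1 := N.smul_gradient_eq (N.F_polarDual h) (N.inner_polarDual h)
  have h2 := (N.polarF_pos h).ne'
  nth_rw 3 [← h1]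
  rw [smul_smul, inv_mul_cancel₀ h2, one_smul]

lemma F_le_of_inner_le {g : En n} {L : ℝ} (hL : 0 ≤ L) (h : ∀ d, ⟪g, d⟫ ≤ L * polarF N d) :
    N.F g ≤ L := by
  rcases eq_or_ne g 0 with rfl | hg
  · rwa [N.F_zero]
  have h1 := h (gradient N.F g)
  rw [real_inner_comm, N.inner_gradient_self hg] at h1
  have h2 : polarF N (gradient N.F g) ≤ 1 := N.polarF_le zero_le_one fun ξ => by
    rw [real_inner_comm, mul_one]; exact N.inner_gradient_le hg ξ
  nlinarith

end MinkowskiNorm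

lemma contDiff_of_contDiffAt_tsupport {E : Type*} [NormedAddCommGroup E] [NormedSpace ℝ E]
    {f : E → ℝ} {k : WithTop ℕ∞} (h : ∀ x ∈ tsupport f, ContDiffAt ℝ k f x) :
    ContDiff ℝ k f := by
  refine contDiff_iff_contDiffAt.2 fun x => ?_
  by_cases hx : x ∈ tsupport f
  · exact h x hx
  · exact contDiffAt_const.congr_of_eventuallyEq (notMem_tsupport_iff_eventuallyEq.1 hx)

lemma gradient_eq_zero_of_notMem_tsupport {n : ℕ} {ψ : En n → ℝ} {x : En n}
    (hx : x ∉ tsupport ψ) : gradient ψ x = 0 := by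
  rw [gradient, fderiv_of_notMem_tsupport ℝ hx, map_zero]

lemma ContDiffOn.continuousOn_gradient {n : ℕ} {u : En n → ℝ} {U : Set (En n)} (hU : IsOpen U)
    (hu : ContDiffOn ℝ 1 u U) : ContinuousOn (gradient u) U :=
  (InnerProductSpace.toDual ℝ (En n)).symm.continuous.comp_continuousOn
    (hu.continuousOn_fderiv_of_isOpen hU le_rfl)

lemma ContDiff.continuous_gradient {n : ℕ} {ψ : En n → ℝ} (h : ContDiff ℝ 1 ψ) :
    Continuous (gradient ψ) :=
  (InnerProductSpace.toDual ℝ (En n)).symm.continuous.comp (h.continuous_fderiv one_ne_zero)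

lemma tsupport_gradient_subset {n : ℕ} (ψ : En n → ℝ) : tsupport (gradient ψ) ⊆ tsupport ψ :=
  closure_minimal (fun _ hx => by_contra fun hx' => hx (gradient_eq_zero_of_notMem_tsupport hx'))
    (isClosed_tsupport ψ)

lemma integrable_of_continuousOn_of_tsupport_subset {n : ℕ} {f : En n → ℝ} {U : Set (En n)}
    (hU : IsOpen U) (hf : ContinuousOn f U) (hc : HasCompactSupport f) (hs : tsupport f ⊆ U) :
    Integrable f :=
  (continuous_of_tsupport fun _ hx => hf.continuousAt (hU.mem_nhds (hs hx)))
    |>.integrable_of_hasCompactSupport hc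

lemma tsupport_inner_subset {n : ℕ} (X Y : En n → En n) :
    tsupport (fun x => ⟪X x, Y x⟫) ⊆ tsupport Y :=
  closure_mono fun _ hx hY => hx (by simp only [hY, inner_zero_right])

lemma integrable_inner_gradient {n : ℕ} {X : En n → En n} {ψ : En n → ℝ} {U : Set (En n)}
    (hU : IsOpen U) (hX : ContinuousOn X U) (hψ : ContDiff ℝ 1 ψ) (hc : HasCompactSupport ψ)
    (hs : tsupport ψ ⊆ U) : Integrable fun x => ⟪X x, gradient ψ x⟫ := by
  have h1 := (tsupport_inner_subset X (gradient ψ)).trans (tsupport_gradient_subset ψ)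
  exact integrable_of_continuousOn_of_tsupport_subset hU
    (hX.inner hψ.continuous_gradient.continuousOn)
    (hc.isCompact.of_isClosed_subset (isClosed_tsupport _) h1) (h1.trans hs)

lemma integrable_mul_of_tsupport_subset {n : ℕ} {Y ψ : En n → ℝ} {U : Set (En n)}
    (hU : IsOpen U) (hY : ContinuousOn Y U) (hψ : Continuous ψ) (hc : HasCompactSupport ψ)
    (hs : tsupport ψ ⊆ U) : Integrable fun x => Y x * ψ x := by
  have h1 : tsupport (fun x => Y x * ψ x) ⊆ tsupport ψ := tsupport_mul_subset_right
  exact integrable_of_continuousOn_of_tsupport_subset hU (hY.mul hψ.continuousOn)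
    (hc.isCompact.of_isClosed_subset (isClosed_tsupport _) h1) (h1.trans hs)

/-- `C¹` functions with compact support are approximated by smooth ones in `C¹`. -/
lemma exists_smooth_approx {n : ℕ} {ψ : En n → ℝ} (hψ : ContDiff ℝ 1 ψ)
    (hc : HasCompactSupport ψ) {δ ε : ℝ} (hδ : 0 < δ) (hε : 0 < ε) :
    ∃ φ : En n → ℝ, ContDiff ℝ (⊤ : ℕ∞) φ ∧ HasCompactSupport φ ∧
      tsupport φ ⊆ cthickening δ (tsupport ψ) ∧ (∀ x, |φ x - ψ x| ≤ ε) ∧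
      ∀ x, ‖gradient φ x - gradient ψ x‖ ≤ ε := by
  have hψ' := hψ.continuous_fderiv one_ne_zero
  obtain ⟨r₁, hr₁, h₁⟩ := Metric.uniformContinuous_iff.1
    (hc.uniformContinuous_of_continuous hψ.continuous) ε hε
  obtain ⟨r₂, hr₂, h₂⟩ := Metric.uniformContinuous_iff.1
    ((hc.fderiv ℝ).uniformContinuous_of_continuous hψ') ε hε
  set r := min (min r₁ r₂) δ
  have hr : 0 < r := lt_min (lt_min hr₁ hr₂) hδ
  let β : ContDiffBump (0 : En n) := ⟨r / 2, r, by positivity, by linarith⟩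
  have hβ : LocallyIntegrable (β.normed volume) volume :=
    β.continuous_normed.locallyIntegrable
  set φ : En n → ℝ := convolution (β.normed volume) ψ (ContinuousLinearMap.lsmul ℝ ℝ) volume with hφ
  have hsupp : Function.support φ ⊆ cthickening δ (tsupport ψ) := by
    intro x hx
    obtain ⟨y, hy, z, hz, rfl⟩ := support_convolution_subset_swap _ hx
    rw [β.support_normed_eq, mem_ball_zero_iff] at hz
    refine mem_cthickening_of_dist_le _ y _ _ (subset_tsupport _ hy) ?_
    rw [dist_eq_norm, add_sub_cancel_left]
    exact hz.le.trans (min_le_right _ _)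
  refine ⟨φ, ?_, ?_, closure_minimal hsupp isClosed_cthickening, fun x => ?_, fun x => ?_⟩
  · exact β.hasCompactSupport_normed.contDiff_convolution_left _ β.contDiff_normed
      hψ.continuous.locallyIntegrable
  · exact β.hasCompactSupport_normed.convolution _ hc
  · rw [← Real.dist_eq]
    refine β.dist_normed_convolution_le hψ.continuous.aestronglyMeasurable fun y hy => ?_
    exact (h₁ ((mem_ball.1 hy).trans_le ((min_le_left _ _).trans (min_le_left _ _)))).le
  · have hd := (hc.hasFDerivAt_convolution_right (ContinuousLinearMap.lsmul ℝ ℝ) hβ hψ x).fderiv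
    rw [gradient, gradient, ← map_sub, LinearIsometryEquiv.norm_map]
    refine ContinuousLinearMap.opNorm_le_bound _ hε.le fun v => ?_
    rw [sub_apply, hφ, hd, convolution_precompR_apply _ hβ (hc.fderiv ℝ) hψ', ← dist_eq_norm]
    refine β.dist_normed_convolution_le (g := fun a => fderiv ℝ ψ a v)
      (hψ'.clm_apply continuous_const).aestronglyMeasurable fun y hy => ?_
    have := h₂ ((mem_ball.1 hy).trans_le ((min_le_left _ _).trans (min_le_right _ _)))
    rw [dist_eq_norm, ← sub_apply]
    refine ((fderiv ℝ ψ y - fderiv ℝ ψ x).le_opNorm v).trans ?_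
    gcongr
    rw [← dist_eq_norm]
    exact this.le

/-- A first order weak identity tested by smooth functions may be tested by `C¹` functions. -/
lemma weak_identity_of_smooth {n : ℕ} {Ω : Set (En n)} (hΩ : IsOpen Ω) {X : En n → En n}
    {Y : En n → ℝ} (hX : ContinuousOn X Ω) (hY : ContinuousOn Y Ω)
    (h : ∀ φ, IsTestFun Ω φ → ∫ x, (⟪X x, gradient φ x⟫ + Y x * φ x) = 0)
    {ψ : En n → ℝ} (hψ : ContDiff ℝ 1 ψ) (hc : HasCompactSupport ψ) (hs : tsupport ψ ⊆ Ω) :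
    ∫ x, (⟪X x, gradient ψ x⟫ + Y x * ψ x) = 0 := by
  obtain ⟨δ, hδ, hδΩ⟩ := hc.isCompact.exists_cthickening_subset_open hΩ hs
  set K := cthickening δ (tsupport ψ) with hKdef
  have hK : IsCompact K := hc.isCompact.cthickening
  have hinteg : IntegrableOn (fun x => ‖X x‖ + |Y x|) K :=
    ((hX.norm.add hY.abs).mono hδΩ).integrableOn_compact hK
  set M := ∫ x in K, (‖X x‖ + |Y x|) with hM
  have hinteg' : ∀ φ : En n → ℝ, ContDiff ℝ 1 φ → HasCompactSupport φ → tsupport φ ⊆ Ω →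
      Integrable fun x => ⟪X x, gradient φ x⟫ + Y x * φ x := fun φ h1 h2 h3 =>
    (integrable_inner_gradient hΩ hX h1 h2 h3).add
      (integrable_mul_of_tsupport_subset hΩ hY h1.continuous h2 h3)
  have key : ∀ ε : ℝ, 0 < ε → |∫ x, (⟪X x, gradient ψ x⟫ + Y x * ψ x)| ≤ ε * M := by
    intro ε hε
    obtain ⟨φ, hφ, hφc, hφs, hφ0, hφ1⟩ := exists_smooth_approx hψ hc hδ hε
    have hφ' : ContDiff ℝ 1 φ := hφ.of_le (by norm_cast)
    rw [← sub_zero (∫ x, (⟪X x, gradient ψ x⟫ + Y x * ψ x)), ← h φ ⟨hφ, hφc, hφs.trans hδΩ⟩,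
      ← integral_sub (hinteg' ψ hψ hc hs) (hinteg' φ hφ' hφc (hφs.trans hδΩ)),
      ← setIntegral_eq_integral_of_forall_compl_eq_zero (s := K), hM, ← integral_const_mul,
      ← Real.norm_eq_abs]
    · refine norm_integral_le_of_norm_le (hinteg.const_mul ε) (Eventually.of_forall fun x => ?_)
      have e : ⟪X x, gradient ψ x⟫ + Y x * ψ x - (⟪X x, gradient φ x⟫ + Y x * φ x) =
          -(⟪X x, gradient φ x - gradient ψ x⟫ + Y x * (φ x - ψ x)) := by
        rw [inner_sub_right]; ring
      rw [e, norm_neg]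
      refine (norm_add_le _ _).trans ?_
      rw [mul_add, norm_mul, Real.norm_eq_abs (Y x), mul_comm ε, mul_comm ε]
      refine add_le_add ((norm_inner_le_norm _ _).trans ?_) ?_
      · exact mul_le_mul_of_nonneg_left (hφ1 x) (norm_nonneg _)
      · exact mul_le_mul_of_nonneg_left (hφ0 x) (abs_nonneg _)
    · intro x hx
      have hx1 : x ∉ tsupport φ := fun h => hx (hφs h)
      have hx2 : x ∉ tsupport ψ := fun h => hx (self_subset_cthickening _ h)
      simp [gradient_eq_zero_of_notMem_tsupport hx1, gradient_eq_zero_of_notMem_tsupport hx2,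
        image_eq_zero_of_notMem_tsupport hx1, image_eq_zero_of_notMem_tsupport hx2]
  have hlim : Tendsto (fun ε : ℝ => ε * M) (𝓝[>] 0) (𝓝 0) := by
    have : Tendsto (fun ε : ℝ => ε * M) (𝓝 0) (𝓝 (0 * M)) := tendsto_id.mul_const M
    rw [zero_mul] at this
    exact this.mono_left nhdsWithin_le_nhds
  have h0 := ge_of_tendsto hlim (eventually_mem_nhdsWithin.mono fun ε hε => key ε hε)
  exact abs_nonpos_iff.1 h0

/-- Weak solutions of the Finsler `p`-Laplace equation, tested by `C¹` functions. -/
def IsPHarmonicC1 {n : ℕ} (N : MinkowskiNorm n) (U : Set (En n)) (p : ℝ) (w : En n → ℝ) : Prop :=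
  ∀ ψ : En n → ℝ, ContDiff ℝ 1 ψ → HasCompactSupport ψ → tsupport ψ ⊆ U →
    ∫ x, ⟪N.flux p (gradient w x), gradient ψ x⟫ = 0

/-- The exponential substitution turns the equation for `u` into the `p`-Laplace equation. -/
lemma isPHarmonicC1_exp {n : ℕ} {N : MinkowskiNorm n} {Ω : Set (En n)} (hΩ : IsOpen Ω) {p : ℝ}
    (hp : 1 < p) {u : En n → ℝ} (hu : ContDiffOn ℝ 1 u Ω) (hsol : IsWeakPSol N Ω p u) :
    IsPHarmonicC1 N Ω p fun x => Real.exp (-u x / (p - 1)) := by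
  intro ψ hψ hc hs
  have hp' : 0 < p - 1 := sub_pos.2 hp
  have hg := hu.continuousOn_gradient hΩ
  have hX : ContinuousOn (fun x => N.flux p (gradient u x)) Ω :=
    (N.continuous_flux hp).comp_continuousOn hg
  have hY : ContinuousOn (fun x => N.F (gradient u x) ^ p) Ω :=
    (N.continuous_F.comp_continuousOn hg).rpow_const fun _ _ => Or.inr (by linarith)
  have hud : ∀ x ∈ Ω, ContDiffAt ℝ 1 u x := fun x hx => hu.contDiffAt (hΩ.mem_nhds hx)
  have hweak : ∀ φ, IsTestFun Ω φ →
      ∫ x, (⟪N.flux p (gradient u x), gradient φ x⟫ + N.F (gradient u x) ^ p * φ x) = 0 := by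
    rintro φ ⟨h1, h2, h3⟩
    have h1' : ContDiff ℝ 1 φ := h1.of_le (by norm_cast)
    rw [integral_add (integrable_inner_gradient hΩ hX h1' h2 h3)
      (integrable_mul_of_tsupport_subset hΩ hY h1'.continuous h2 h3)]
    have h4 := hsol φ ⟨h1, h2, h3⟩
    rw [setIntegral_eq_integral_of_forall_compl_eq_zero,
      setIntegral_eq_integral_of_forall_compl_eq_zero] at h4
    · simp only [MinkowskiNorm.flux, real_inner_smul_left]
      linarith
    · intro x hx
      simp [image_eq_zero_of_notMem_tsupport fun h => hx (h3 h)]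
    · intro x hx
      simp [gradient_eq_zero_of_notMem_tsupport fun h => hx (h3 h)]
  set χ : En n → ℝ := fun x => Real.exp (-u x) * ψ x with hχ
  have hχs : tsupport χ ⊆ tsupport ψ := tsupport_mul_subset_right
  have hχ1 : ContDiff ℝ 1 χ := contDiff_of_contDiffAt_tsupport fun x hx =>
    (hud x (hs (hχs hx))).neg.exp.mul hψ.contDiffAt
  have h0 := weak_identity_of_smooth hΩ hX hY hweak hχ1
    (hc.isCompact.of_isClosed_subset (isClosed_tsupport _) hχs) (hχs.trans hs)
  have hpt : ∀ x, ⟪N.flux p (gradient (fun x => Real.exp (-u x / (p - 1))) x), gradient ψ x⟫ =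
      -((p - 1)⁻¹ ^ (p - 1)) *
        (⟪N.flux p (gradient u x), gradient χ x⟫ + N.F (gradient u x) ^ p * χ x) := by
    intro x
    by_cases hx : x ∈ tsupport ψ
    swap
    · have hx' : x ∉ tsupport χ := fun h => hx (hχs h)
      simp [gradient_eq_zero_of_notMem_tsupport hx, gradient_eq_zero_of_notMem_tsupport hx',
        image_eq_zero_of_notMem_tsupport hx']
    have hdu : HasFDerivAt u (fderiv ℝ u x) x :=
      ((hud x (hs hx)).differentiableAt one_ne_zero).hasFDerivAt
    have e1 : gradient (fun x => Real.exp (-u x / (p - 1))) x =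
        -(((p - 1)⁻¹ * Real.exp (-u x / (p - 1))) • gradient u x) := by
      have h1 := (hdu.neg.mul_const (p - 1)⁻¹).exp
      have h2 : HasFDerivAt (fun x => Real.exp (-u x / (p - 1))) _ x := h1
      refine ext_inner_right ℝ fun v => ?_
      rw [inner_gradient_left, h2.fderiv, inner_neg_left, real_inner_smul_left,
        inner_gradient_left]
      simp [div_eq_mul_inv]
      ring
    have e2 : gradient χ x = Real.exp (-u x) • gradient ψ x -
        (Real.exp (-u x) * ψ x) • gradient u x := by
      have h2 : HasFDerivAt χ _ x := hdu.neg.exp.mul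
        (hψ.differentiable one_ne_zero x).hasFDerivAt
      refine ext_inner_right ℝ fun v => ?_
      rw [inner_gradient_left, h2.fderiv, inner_sub_left, real_inner_smul_left,
        real_inner_smul_left, inner_gradient_left, inner_gradient_left]
      simp
      ring
    rw [e1, N.flux_neg, N.flux_smul hp (by positivity), e2, inner_neg_left, real_inner_smul_left,
      inner_sub_right, inner_smul_right, inner_smul_right, N.inner_flux_self hp,
      Real.mul_rpow (by positivity) (Real.exp_pos _).le, ← Real.exp_mul,
      div_mul_cancel₀ _ hp'.ne']
    ring
  simp only [hpt]
  rw [integral_const_mul, h0, mul_zero]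

lemma hasDerivAt_max_zero_sq (t : ℝ) :
    HasDerivAt (fun t : ℝ => max t 0 ^ 2) (2 * max t 0) t := by
  rcases lt_trichotomy t 0 with h | rfl | h
  · rw [max_eq_right h.le, mul_zero]
    refine (hasDerivAt_const t (0 : ℝ)).congr_of_eventuallyEq ?_
    filter_upwards [gt_mem_nhds h] with y hy
    simp [max_eq_right hy.le]
  · rw [max_self, mul_zero, hasDerivAt_iff_isLittleO]
    refine Asymptotics.IsBigO.trans_isLittleO (g := fun y : ℝ => y ^ 2) ?_ ?_
    · refine Asymptotics.isBigO_of_le _ fun y => ?_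
      rcases le_total y 0 with hy | hy <;> simp [hy, sq_nonneg]
    · simpa using Asymptotics.isLittleO_pow_id (𝕜 := ℝ) one_lt_two
  · rw [max_eq_left h.le]
    have h1 : HasDerivAt (fun t : ℝ => t ^ 2) (2 * t) t := by simpa using hasDerivAt_pow 2 t
    refine h1.congr_of_eventuallyEq ?_
    filter_upwards [lt_mem_nhds h] with y hy
    simp [max_eq_left hy.le]

lemma contDiff_max_zero_sq : ContDiff ℝ 1 fun t : ℝ => max t 0 ^ 2 := by
  refine contDiff_one_iff_deriv.2 ⟨fun t => (hasDerivAt_max_zero_sq t).differentiableAt, ?_⟩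
  rw [funext fun t => (hasDerivAt_max_zero_sq t).deriv]
  fun_prop

lemma IsPHarmonicC1.mono {n : ℕ} {N : MinkowskiNorm n} {U V : Set (En n)} {p : ℝ} {w : En n → ℝ}
    (h : IsPHarmonicC1 N V p w) (hUV : U ⊆ V) : IsPHarmonicC1 N U p w :=
  fun ψ h1 h2 h3 => h ψ h1 h2 (h3.trans hUV)

lemma isPHarmonicC1_const {n : ℕ} (N : MinkowskiNorm n) (U : Set (En n)) {p : ℝ} (hp : 1 < p)
    (c : ℝ) : IsPHarmonicC1 N U p fun _ => c := by
  intro ψ _ _ _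
  simp [gradient_fun_const, N.flux_zero hp]

lemma IsPHarmonicC1.const_mul {n : ℕ} {N : MinkowskiNorm n} {U : Set (En n)} {p : ℝ}
    {w : En n → ℝ} (h : IsPHarmonicC1 N U p w) (hp : 1 < p) {c : ℝ} (hc : 0 < c) :
    IsPHarmonicC1 N U p fun x => c * w x := by
  intro ψ h1 h2 h3
  have e : ∀ x, gradient (fun x => c * w x) x = c • gradient w x := by
    intro x
    have := congrFun (fderiv_const_smul_field (𝕜 := ℝ) (R := ℝ) (f := w) c) x
    simp only [Pi.smul_def, smul_eq_mul] at this
    rw [gradient, gradient, this, map_smul]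
  simp only [e, N.flux_smul hp hc, real_inner_smul_left]
  rw [integral_const_mul, h ψ h1 h2 h3, mul_zero]

lemma IsPHarmonicC1.comp_add_right {n : ℕ} {N : MinkowskiNorm n} {U : Set (En n)} {p : ℝ}
    {w : En n → ℝ} (h : IsPHarmonicC1 N U p w) (a : En n) :
    IsPHarmonicC1 N {x | x + a ∈ U} p fun x => w (x + a) := by
  intro ψ h1 h2 h3
  have e : ∀ (f : En n → ℝ) (b x : En n), gradient (fun x => f (x + b)) x = gradient f (x + b) := by
    intro f b x
    rw [gradient, gradient, fderiv_comp_add_right]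
  have hs : tsupport (fun x => ψ (x + -a)) = (Homeomorph.addRight (-a)) ⁻¹' tsupport ψ :=
    tsupport_comp_eq_preimage ψ (Homeomorph.addRight (-a))
  have h0 := h (fun x => ψ (x + -a)) (h1.comp (by fun_prop))
    (h2.comp_homeomorph (Homeomorph.addRight (-a))) (by
      rw [hs]
      intro x hx
      simpa using h3 hx)
  rw [← integral_add_right_eq_self _ a] at h0
  simpa [e] using h0

/-- The weak comparison principle. -/
lemma IsPHarmonicC1.le_of_le_frontier {n : ℕ} (hn : n ≠ 0) {N : MinkowskiNorm n} {U : Set (En n)}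
    (hU : IsOpen U) {p : ℝ} (hp : 1 < p) {w₁ w₂ : En n → ℝ}
    (h₁ : IsPHarmonicC1 N U p w₁) (h₂ : IsPHarmonicC1 N U p w₂)
    (hd₁ : ContDiffOn ℝ 1 w₁ U) (hd₂ : ContDiffOn ℝ 1 w₂ U)
    (hc₁ : ContinuousOn w₁ (closure U)) (hc₂ : ContinuousOn w₂ (closure U))
    (hfr : ∀ x ∈ frontier U, w₁ x ≤ w₂ x)
    (hinf : ∀ ε : ℝ, 0 < ε → ∀ᶠ x in cocompact (En n), x ∈ closure U → w₁ x ≤ w₂ x + ε) :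
    ∀ x ∈ U, w₁ x ≤ w₂ x := by
  intro x₀ hx₀
  refine le_of_forall_pos_le_add fun ε hε => ?_
  set g : En n → ℝ := fun x => w₁ x - w₂ x - ε with hg
  set K : Set (En n) := {x | x ∈ closure U ∧ 0 ≤ g x} with hK
  have hgc : ContinuousOn g (closure U) := (hc₁.sub hc₂).sub continuousOn_const
  have hKclosed : IsClosed K := hgc.preimage_isClosed_of_isClosed isClosed_closure isClosed_Ici
  have hKU : K ⊆ U := by
    rintro x ⟨hx, hgx⟩
    by_contra hxU
    have := hfr x ⟨hx, by rwa [hU.interior_eq]⟩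
    simp only [hg] at hgx
    linarith
  have hKc : IsCompact K := by
    obtain ⟨T, hT, hTK⟩ := mem_cocompact.1 (hinf (ε / 2) (half_pos hε))
    refine hT.of_isClosed_subset hKclosed fun x hx => by_contra fun hxT => ?_
    have h1 := hTK hxT hx.1
    have h2 := hx.2
    simp only [hg] at h2
    linarith
  set ψ : En n → ℝ := U.indicator fun x => max (g x) 0 ^ 2 with hψ
  have hψs : tsupport ψ ⊆ K := by
    refine closure_minimal (fun x hx => ?_) hKclosed
    have hxU : x ∈ U := by_contra fun h => hx (indicator_of_notMem h _)
    refine ⟨subset_closure hxU, by_contra fun h => hx ?_⟩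
    rw [hψ, indicator_of_mem hxU, max_eq_right (not_le.1 h).le]
    norm_num
  have hψc : HasCompactSupport ψ := hKc.of_isClosed_subset (isClosed_tsupport _) hψs
  have hψU := hψs.trans hKU
  have hev : ∀ x ∈ U, ψ =ᶠ[𝓝 x] fun x => max (g x) 0 ^ 2 := fun x hx =>
    (hU.eventually_mem hx).mono fun y hy => indicator_of_mem hy _
  have hw₁ : ∀ x ∈ U, ContDiffAt ℝ 1 w₁ x := fun x hx => hd₁.contDiffAt (hU.mem_nhds hx)
  have hw₂ : ∀ x ∈ U, ContDiffAt ℝ 1 w₂ x := fun x hx => hd₂.contDiffAt (hU.mem_nhds hx)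
  have hψ1 : ContDiff ℝ 1 ψ := contDiff_of_contDiffAt_tsupport fun x hx =>
    ContDiffAt.congr_of_eventuallyEq
      (contDiff_max_zero_sq.contDiffAt.comp (f := g) x
        (((hw₁ x (hψU hx)).sub (hw₂ x (hψU hx))).sub contDiffAt_const)) (hev x (hψU hx))
  have hgrad : ∀ x ∈ U, gradient ψ x = (2 * max (g x) 0) • (gradient w₁ x - gradient w₂ x) := by
    intro x hx
    have h3 : HasFDerivAt g (fderiv ℝ w₁ x - fderiv ℝ w₂ x) x :=
      (((hw₁ x hx).differentiableAt one_ne_zero).hasFDerivAt.sub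
        ((hw₂ x hx).differentiableAt one_ne_zero).hasFDerivAt).sub_const ε
    have h4 := ((hasDerivAt_max_zero_sq (g x)).comp_hasFDerivAt x h3).congr_of_eventuallyEq
      (hev x hx)
    rw [gradient, h4.fderiv, map_smul, map_sub]
    rfl
  set X : En n → En n := fun x => N.flux p (gradient w₁ x) - N.flux p (gradient w₂ x) with hX
  have hX₁ : ContinuousOn (fun x => N.flux p (gradient w₁ x)) U :=
    (N.continuous_flux hp).comp_continuousOn (hd₁.continuousOn_gradient hU)
  have hX₂ : ContinuousOn (fun x => N.flux p (gradient w₂ x)) U :=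
    (N.continuous_flux hp).comp_continuousOn (hd₂.continuousOn_gradient hU)
  have hXc : ContinuousOn X U := hX₁.sub hX₂
  have hIc : Continuous fun x => ⟪X x, gradient ψ x⟫ := continuous_of_tsupport fun x hx =>
    (hXc.inner hψ1.continuous_gradient.continuousOn).continuousAt (hU.mem_nhds
      (hψU (tsupport_gradient_subset ψ (tsupport_inner_subset X (gradient ψ) hx))))
  have hmono : ∀ ξ η : En n, 0 ≤ ⟪N.flux p ξ - N.flux p η, ξ - η⟫ := by
    intro ξ η
    rcases eq_or_ne ξ η with rfl | h
    · simp
    · exact (N.flux_strictMono hp h).le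
  have hI0 : ∀ x, 0 ≤ ⟪X x, gradient ψ x⟫ := by
    intro x
    by_cases hx : x ∈ U
    · rw [hgrad x hx, inner_smul_right]
      exact mul_nonneg (by positivity) (hmono _ _)
    · rw [gradient_eq_zero_of_notMem_tsupport fun h => hx (hψU h), inner_zero_right]
  have hinteg : ∫ x, ⟪X x, gradient ψ x⟫ = 0 := by
    simp only [hX, inner_sub_left]
    rw [integral_sub (integrable_inner_gradient hU hX₁ hψ1 hψc hψU)
      (integrable_inner_gradient hU hX₂ hψ1 hψc hψU), h₁ ψ hψ1 hψc hψU, h₂ ψ hψ1 hψc hψU, sub_zero]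
  have hI : (fun x => ⟪X x, gradient ψ x⟫) = 0 :=
    (hIc.ae_eq_iff_eq volume continuous_zero).1 ((integral_eq_zero_iff_of_nonneg hI0
      (integrable_inner_gradient hU hXc hψ1 hψc hψU)).1 hinteg)
  have hg0 : ∀ x, gradient ψ x = 0 := by
    intro x
    by_cases hx : x ∈ U
    swap
    · exact gradient_eq_zero_of_notMem_tsupport fun h => hx (hψU h)
    have h5 := congrFun hI x
    simp only [hgrad x hx, inner_smul_right, Pi.zero_apply] at h5
    rw [hgrad x hx]
    rcases mul_eq_zero.1 h5 with h6 | h6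
    · rw [h6, zero_smul]
    · by_cases h7 : gradient w₁ x = gradient w₂ x
      · rw [h7, sub_self, smul_zero]
      · exact absurd h6 (N.flux_strictMono hp h7).ne'
  have hconst : ∀ y, ψ x₀ = ψ y := fun y =>
    is_const_of_fderiv_eq_zero (hψ1.differentiable one_ne_zero)
      (fun x => (InnerProductSpace.toDual ℝ (En n)).symm.map_eq_zero_iff.1 (hg0 x)) x₀ y
  have : Nonempty (Fin n) := ⟨⟨0, Nat.pos_of_ne_zero hn⟩⟩
  have hne : tsupport ψ ≠ univ := hψc.ne_univ
  obtain ⟨y, hy⟩ := (ne_univ_iff_exists_notMem _).1 hne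
  have h8 := hconst y
  rw [image_eq_zero_of_notMem_tsupport hy, hψ, indicator_of_mem hx₀, sq_eq_zero_iff,
    max_eq_right_iff] at h8
  simp only [hg] at h8
  linarith

lemma integral_inner_self_gradient {n : ℕ} {χ : En n → ℝ} (hχ : ContDiff ℝ 1 χ)
    (hc : HasCompactSupport χ) : ∫ x, ⟪x, gradient χ x⟫ = -(n * ∫ x, χ x) := by
  have hi : Integrable χ := hχ.continuous.integrable_of_hasCompactSupport hc
  have hd : ∀ v : En n, Continuous fun x => fderiv ℝ χ x v := fun v =>
    (hχ.continuous_fderiv one_ne_zero).clm_apply continuous_const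
  have hdc : ∀ v : En n, HasCompactSupport fun x => fderiv ℝ χ x v := fun v => hc.fderiv_apply ℝ v
  have hcoord : ∀ (i : Fin n), Continuous fun x : En n => x i := fun i => by fun_prop
  have e : ∀ x : En n, ⟪x, gradient χ x⟫ =
      ∑ i, x i * fderiv ℝ χ x (EuclideanSpace.single i 1) := by
    intro x
    rw [inner_gradient_right, conj_trivial]
    have h := congrArg (fderiv ℝ χ x) ((EuclideanSpace.basisFun (Fin n) ℝ).sum_repr x)
    rw [← h]
    simp
  have hinteg : ∀ i, Integrable fun x : En n => x i * fderiv ℝ χ x (EuclideanSpace.single i 1) :=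
    fun i => ((hcoord i).mul (hd _)).integrable_of_hasCompactSupport (hdc _).mul_left
  have hone : ∀ i, ∫ x : En n, x i * fderiv ℝ χ x (EuclideanSpace.single i 1) = -∫ x, χ x := by
    intro i
    have hf : ∀ x : En n, HasFDerivAt (fun x : En n => x i)
        (EuclideanSpace.proj i : En n →L[ℝ] ℝ) x := fun x =>
      (EuclideanSpace.proj i : En n →L[ℝ] ℝ).hasFDerivAt
    have h1 : ∀ x : En n, fderiv ℝ (fun x : En n => x i) x (EuclideanSpace.single i 1) = 1 := by
      intro x
      rw [(hf x).fderiv]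
      simp
    rw [integral_mul_fderiv_eq_neg_fderiv_mul_of_integrable]
    · simp [h1]
    · simpa [h1] using hi
    · exact hinteg i
    · exact ((hcoord i).mul hχ.continuous).integrable_of_hasCompactSupport hc.mul_left
    · exact fun x _ => (hf x).differentiableAt
    · exact fun x _ => hχ.differentiable one_ne_zero x
  simp only [e]
  rw [integral_finsetSum _ fun i _ => hinteg i]
  simp [hone]

namespace MinkowskiNorm

variable {n : ℕ} (N : MinkowskiNorm n)

/-- Away from the origin, the vector field `x / F^o(x)^n` is divergence free. -/
lemma integral_inner_polarF_pow_smul {ψ : En n → ℝ} (hψ : ContDiff ℝ 1 ψ)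
    (hc : HasCompactSupport ψ) (hs : tsupport ψ ⊆ {0}ᶜ) :
    ∫ x, ⟪(polarF N x ^ n)⁻¹ • x, gradient ψ x⟫ = 0 := by
  set a : En n → ℝ := fun x => (polarF N x ^ n)⁻¹ with ha
  have hac : ∀ x ∈ ({0}ᶜ : Set (En n)), ContDiffAt ℝ 1 a x := fun x hx =>
    ((N.contDiffOn_polarF.contDiffAt (isOpen_compl_singleton.mem_nhds hx)).pow n).inv
      (pow_pos (N.polarF_pos hx) n).ne'
  set χ : En n → ℝ := fun x => a x * ψ x with hχ
  have hχs : tsupport χ ⊆ tsupport ψ := tsupport_mul_subset_right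
  have hχ1 : ContDiff ℝ 1 χ := contDiff_of_contDiffAt_tsupport fun x hx =>
    (hac x (hs (hχs hx))).mul hψ.contDiffAt
  have hχc : HasCompactSupport χ := hc.isCompact.of_isClosed_subset (isClosed_tsupport _) hχs
  have hpt : ∀ x, ⟪(polarF N x ^ n)⁻¹ • x, gradient ψ x⟫ = ⟪x, gradient χ x⟫ + n * χ x := by
    intro x
    by_cases hx : x ∈ tsupport ψ
    swap
    · have hx' : x ∉ tsupport χ := fun h => hx (hχs h)
      simp [gradient_eq_zero_of_notMem_tsupport hx, gradient_eq_zero_of_notMem_tsupport hx',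
        image_eq_zero_of_notMem_tsupport hx']
    have hx0 : x ≠ 0 := hs hx
    have hP := N.polarF_pos hx0
    have h1 : HasFDerivAt a _ x :=
      (hasDerivAt_inv (pow_pos hP n).ne').comp_hasFDerivAt x
        ((hasDerivAt_pow n (polarF N x)).comp_hasFDerivAt x
          (N.hasGradientAt_polarF hx0).hasFDerivAt)
    have h2 : HasFDerivAt χ _ x := h1.mul (hψ.differentiable one_ne_zero x).hasFDerivAt
    rw [real_inner_smul_left, inner_gradient_right, inner_gradient_right, h2.fderiv]
    simp only [conj_trivial, ha, hχ, add_apply, smul_apply, smul_eq_mul,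
      InnerProductSpace.toDual_apply_apply, N.inner_polarDual hx0]
    rcases Nat.eq_zero_or_pos n with rfl | hn
    · simp
    · have : polarF N x ^ n = polarF N x ^ (n - 1) * polarF N x := by
        rw [← pow_succ, Nat.sub_add_cancel hn]
      rw [this]
      field_simp
      ring
  have hi1 : Integrable fun x => ⟪x, gradient χ x⟫ :=
    integrable_inner_gradient isOpen_univ continuousOn_id hχ1 hχc (subset_univ _)
  simp only [hpt]
  rw [integral_add hi1 ((hχ1.continuous.integrable_of_hasCompactSupport hχc).const_mul _),
    integral_inner_self_gradient hχ1 hχc, integral_const_mul]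
  ring

/-- The fundamental solution of the Finsler `p`-Laplace equation, normalised to be `1` on the
boundary of the Wulff shape of radius `R` centered at the origin. -/
def fundSol (p R : ℝ) (x : En n) : ℝ := (polarF N x / R) ^ (-((n - p) / (p - 1)))

lemma contDiffOn_fundSol (p : ℝ) {R : ℝ} (hR : 0 < R) : ContDiffOn ℝ 1 (N.fundSol p R) {0}ᶜ :=
  (N.contDiffOn_polarF.div_const R).rpow_const_of_ne
    fun _ hx => (div_pos (N.polarF_pos hx) hR).ne'

lemma isPHarmonicC1_fundSol {p R : ℝ} (hp : 1 < p) (hpn : p < n) (hR : 0 < R) :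
    IsPHarmonicC1 N {0}ᶜ p (N.fundSol p R) := by
  intro ψ hψ hc hs
  have hp' : 0 < p - 1 := sub_pos.2 hp
  set γ : ℝ := (n - p) / (p - 1) with hγ
  have hγ0 : 0 < γ := div_pos (sub_pos.2 hpn) hp'
  have hexp : (-γ - 1) * (p - 1) = -((n : ℝ) - 1) := by
    rw [hγ]
    field_simp
    ring
  have hpt : ∀ x, ⟪N.flux p (gradient (N.fundSol p R) x), gradient ψ x⟫ =
      -((γ / R) ^ (p - 1) * R ^ ((n : ℝ) - 1)) * ⟪(polarF N x ^ n)⁻¹ • x, gradient ψ x⟫ := by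
    intro x
    by_cases hx : x ∈ tsupport ψ
    swap
    · simp [gradient_eq_zero_of_notMem_tsupport hx]
    have hx0 : x ≠ 0 := hs hx
    have hP := N.polarF_pos hx0
    have hPR := div_pos hP hR
    have h0 : HasFDerivAt (fun y => polarF N y / R) _ x :=
      (N.hasGradientAt_polarF hx0).hasFDerivAt.mul_const R⁻¹
    have h1 : HasFDerivAt (N.fundSol p R) _ x :=
      HasDerivAt.comp_hasFDerivAt (f := fun y => polarF N y / R) x
        (Real.hasDerivAt_rpow_const (p := -γ) (Or.inl hPR.ne')) h0
    have e1 : gradient (N.fundSol p R) x =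
        -((γ / R * (polarF N x / R) ^ (-γ - 1)) • N.polarDual x) := by
      rw [gradient, h1.fderiv, map_smul, map_smul, LinearIsometryEquiv.symm_apply_apply, smul_smul,
        ← neg_smul]
      congr 1
      field_simp
    have e2 : (polarF N x / R) ^ (-((n : ℝ) - 1)) =
        R ^ ((n : ℝ) - 1) * ((polarF N x ^ n)⁻¹ * polarF N x) := by
      rw [Real.rpow_neg hPR.le, Real.div_rpow hP.le hR.le, Real.rpow_sub_one hP.ne',
        Real.rpow_natCast]
      field_simp
    rw [e1, N.flux_neg, N.flux_smul hp (by positivity), flux, N.F_polarDual hx0, Real.one_rpow,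
      one_smul, N.gradient_F_polarDual hx0, Real.mul_rpow (by positivity) (by positivity),
      ← Real.rpow_mul hPR.le, hexp, e2, inner_neg_left]
    simp only [real_inner_smul_left]
    field_simp
  simp only [hpt]
  rw [integral_const_mul, N.integral_inner_polarF_pow_smul hψ hc hs, mul_zero]

end MinkowskiNorm

/-- A `C¹` solution of the exterior problem for the Finsler `p`-Laplace equation with boundary
value `1`, decaying at infinity. -/
structure IsPCapacitary {n : ℕ} (N : MinkowskiNorm n) (Ω : Set (En n)) (p : ℝ)
    (v : En n → ℝ) : Prop where
  contDiffOn : ContDiffOn ℝ 1 v Ω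
  continuousOn : ContinuousOn v (closure Ω)
  harmonic : IsPHarmonicC1 N Ω p v
  nonneg : ∀ x, 0 ≤ v x
  eq_one : ∀ x ∈ frontier Ω, v x = 1
  tendsto : Tendsto v (cocompact (En n)) (𝓝 0)

lemma mem_or_mem_frontier_of_mem_closure {n : ℕ} {Ω : Set (En n)} {x : En n} (hx : x ∈ closure Ω) :
    x ∈ Ω ∨ x ∈ frontier Ω := by
  rw [closure_eq_self_union_frontier] at hx
  exact hx

namespace MinkowskiNorm

variable {n : ℕ} (N : MinkowskiNorm n)

lemma tendsto_fundSol {p R : ℝ} (hp : 1 < p) (hpn : p < n) (hR : 0 < R) :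
    Tendsto (N.fundSol p R) (cocompact (En n)) (𝓝 0) :=
  (tendsto_rpow_neg_atTop (div_pos (sub_pos.2 hpn) (sub_pos.2 hp))).comp
    (N.tendsto_polarF.atTop_div_const hR)

lemma fundSol_le_one {p R : ℝ} (hp : 1 < p) (hpn : p < n) (hR : 0 < R) {x : En n}
    (hx : R ≤ polarF N x) : N.fundSol p R x ≤ 1 :=
  Real.rpow_le_one_of_one_le_of_nonpos ((one_le_div hR).2 hx)
    (neg_nonpos.2 (div_pos (sub_pos.2 hpn) (sub_pos.2 hp)).le)

lemma exp_le_fundSol {p R s : ℝ} (hp : 1 < p) (hpn : p < n) (hR : 0 < R) {x : En n}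
    (hx : 0 < polarF N x) (hxs : polarF N x ≤ R + s) :
    Real.exp (-((n - p) / R * s) / (p - 1)) ≤ N.fundSol p R x := by
  have hq := div_pos hx hR
  have hγ := div_pos (sub_pos.2 hpn) (sub_pos.2 hp)
  rw [fundSol, Real.rpow_def_of_pos hq, Real.exp_le_exp]
  have h1 : Real.log (polarF N x / R) ≤ s / R := by
    refine (Real.log_le_sub_one_of_pos hq).trans ?_
    rw [sub_le_iff_le_add, div_add_one hR.ne']
    gcongr
    linarith
  have h2 := mul_le_mul_of_nonneg_right h1 hγ.le
  have h3 : -((n - p) / R * s) / (p - 1) = -(s / R * ((n - p) / (p - 1))) := by ring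
  rw [h3]
  linarith

lemma le_polarF_of_wulff_subset {Ω : Set (En n)} {R : ℝ} {x₀ : En n} (h : Wulff N R x₀ ⊆ Ωᶜ)
    {x : En n} (hx : x ∈ closure Ω) : R ≤ polarF N (x - x₀) := by
  have hcl : IsClosed {x : En n | R ≤ polarF N (x - x₀)} :=
    isClosed_le continuous_const (N.continuous_polarF.comp (by fun_prop))
  have hsub : Ω ⊆ {x : En n | R ≤ polarF N (x - x₀)} := fun y hy =>
    show R ≤ polarF N (y - x₀) from not_lt.1 fun h' => h h' hy
  exact closure_minimal hsub hcl hx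

lemma polarF_le_of_mem_frontier_wulff {R : ℝ} {x₀ x : En n} (hx : x ∈ frontier (Wulff N R x₀)) :
    polarF N (x - x₀) ≤ R := by
  have hcl : IsClosed {x : En n | polarF N (x - x₀) ≤ R} :=
    isClosed_le (N.continuous_polarF.comp (by fun_prop)) continuous_const
  exact closure_minimal (fun y (hy : polarF N (y - x₀) < R) => hy.le) hcl hx.1

end MinkowskiNorm

namespace IsPCapacitary

variable {n : ℕ} {N : MinkowskiNorm n} {Ω : Set (En n)} {p R : ℝ} {v : En n → ℝ}

lemma le_one (hv : IsPCapacitary N Ω p v) (hΩ : IsOpen Ω) (hn : n ≠ 0) (hp : 1 < p) {x : En n}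
    (hx : x ∈ closure Ω) : v x ≤ 1 := by
  rcases mem_or_mem_frontier_of_mem_closure hx with h | h
  · refine hv.harmonic.le_of_le_frontier hn hΩ hp (isPHarmonicC1_const N Ω hp 1) hv.contDiffOn
      contDiffOn_const hv.continuousOn continuousOn_const (fun y hy => (hv.eq_one y hy).le)
      (fun ε hε => ?_) x h
    filter_upwards [hv.tendsto.eventually_le_const hε] with y hy _
    linarith
  · exact (hv.eq_one x h).le

/-- The fundamental solution centered at a Wulff shape in the complement is a lower barrier. -/
lemma fundSol_le (hv : IsPCapacitary N Ω p v) (hΩ : IsOpen Ω) (hp : 1 < p) (hpn : p < n)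
    (hR : 0 < R) {x₀ : En n} (hW : Wulff N R x₀ ⊆ Ωᶜ) {x : En n} (hx : x ∈ closure Ω) :
    N.fundSol p R (x - x₀) ≤ v x := by
  have hn : n ≠ 0 := by
    rintro rfl
    norm_num at hpn
    linarith
  have hle : ∀ y ∈ closure Ω, N.fundSol p R (y - x₀) ≤ 1 := fun y hy =>
    N.fundSol_le_one hp hpn hR (N.le_polarF_of_wulff_subset hW hy)
  have hne : ∀ y ∈ closure Ω, y - x₀ ∈ ({0}ᶜ : Set (En n)) := by
    intro y hy h0
    have := N.le_polarF_of_wulff_subset hW hy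
    rw [mem_singleton_iff.1 h0, N.polarF_zero] at this
    linarith
  rcases mem_or_mem_frontier_of_mem_closure hx with h | h
  swap
  · exact (hle x hx).trans (hv.eq_one x h).ge
  have hd : ContDiffOn ℝ 1 (fun y => N.fundSol p R (y - x₀)) {y | y - x₀ ∈ ({0}ᶜ : Set (En n))} :=
    (N.contDiffOn_fundSol p hR).comp (by fun_prop) fun y hy => hy
  have hh : IsPHarmonicC1 N Ω p fun y => N.fundSol p R (y - x₀) := by
    have := (N.isPHarmonicC1_fundSol hp hpn hR).comp_add_right (-x₀)
    simp only [← sub_eq_add_neg] at this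
    exact this.mono fun y hy => hne y (subset_closure hy)
  refine hh.le_of_le_frontier hn hΩ hp hv.harmonic (hd.mono fun y hy => hne y (subset_closure hy))
    hv.contDiffOn (hd.continuousOn.mono hne) hv.continuousOn
    (fun y hy => (hle y hy.1).trans (hv.eq_one y hy).ge) (fun ε hε => ?_) x h
  have ht : Tendsto (fun y => N.fundSol p R (y - x₀)) (cocompact (En n)) (𝓝 0) :=
    (N.tendsto_fundSol hp hpn hR).comp
      (Homeomorph.subRight x₀).isClosedEmbedding.tendsto_cocompact
  filter_upwards [ht.eventually_le_const hε] with y hy _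
  linarith [hv.nonneg y]

lemma exp_le_of_mem_frontier (hv : IsPCapacitary N Ω p v) (hΩ : IsOpen Ω) (hp : 1 < p)
    (hpn : p < n) (hR : 0 < R) {x₀ x h : En n} (hW : Wulff N R x₀ ⊆ Ωᶜ)
    (hx : x ∈ frontier (Wulff N R x₀)) (hxh : x + h ∈ closure Ω) :
    Real.exp (-((n - p) / R * polarF N h) / (p - 1)) ≤ v (x + h) := by
  refine le_trans (N.exp_le_fundSol hp hpn hR ?_ ?_) (hv.fundSol_le hΩ hp hpn hR hW hxh)
  · exact hR.trans_le (N.le_polarF_of_wulff_subset hW hxh)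
  · rw [add_sub_right_comm]
    exact (N.polarF_add_le _ _).trans
      (add_le_add_left (N.polarF_le_of_mem_frontier_wulff hx) _)

/-- Comparison of the potential with its translates. -/
lemma exp_mul_le_add (hv : IsPCapacitary N Ω p v) (hΩ : IsOpen Ω) (hp : 1 < p)
    (hpn : p < n) (hR : 0 < R)
    (htouch : ∀ x ∈ frontier Ω, ∃ x₀ : En n,
      Wulff N R x₀ ⊆ Ωᶜ ∧ x ∈ frontier (Wulff N R x₀))
    {x h : En n} (hx : x ∈ Ω) (hxh : x + h ∈ Ω) :
    Real.exp (-((n - p) / R * polarF N h) / (p - 1)) * v x ≤ v (x + h) := by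
  have hn : n ≠ 0 := by
    rintro rfl
    norm_num at hpn
    linarith
  set c := Real.exp (-((n - p) / R * polarF N h) / (p - 1)) with hc
  have hc0 : 0 < c := Real.exp_pos _
  have hc1 : c ≤ 1 := by
    rw [hc, Real.exp_le_one_iff]
    have := mul_nonneg (div_pos (sub_pos.2 hpn) hR).le (N.polarF_nonneg h)
    exact div_nonpos_of_nonpos_of_nonneg (neg_nonpos.2 this) (sub_pos.2 hp).le
  set Ω' : Set (En n) := {y | y + h ∈ Ω} with hΩ'
  have e : Ω' = Homeomorph.addRight h ⁻¹' Ω := rfl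
  have hcl : ∀ y ∈ closure Ω', y + h ∈ closure Ω := by
    rw [e, ← (Homeomorph.addRight h).preimage_closure]
    exact fun y hy => hy
  have hfr : ∀ y ∈ frontier Ω', y + h ∈ frontier Ω := by
    rw [e, ← (Homeomorph.addRight h).preimage_frontier]
    exact fun y hy => hy
  have hsub₁ : closure (Ω ∩ Ω') ⊆ closure Ω := closure_mono inter_subset_left
  have hsub₂ : closure (Ω ∩ Ω') ⊆ closure Ω' := closure_mono inter_subset_right
  refine ((hv.harmonic.mono inter_subset_left).const_mul hp hc0).le_of_le_frontier hn
    (hΩ.inter (hΩ.preimage (by fun_prop))) hp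
    ((hv.harmonic.comp_add_right h).mono inter_subset_right)
    (contDiffOn_const.mul (hv.contDiffOn.mono inter_subset_left))
    (hv.contDiffOn.comp (by fun_prop) fun y hy => hy.2)
    (continuousOn_const.mul (hv.continuousOn.mono hsub₁))
    (hv.continuousOn.comp (by fun_prop) fun y hy => hcl y (hsub₂ hy)) (fun y hy => ?_)
    (fun ε hε => ?_) x ⟨hx, hxh⟩
  · rcases frontier_inter_subset Ω Ω' hy with ⟨h1, h2⟩ | ⟨h1, h2⟩
    · obtain ⟨x₀, hW, hx₀⟩ := htouch y h1
      rw [hv.eq_one y h1, mul_one]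
      exact hv.exp_le_of_mem_frontier hΩ hp hpn hR hW hx₀ (hcl y h2)
    · rw [hv.eq_one _ (hfr y h2)]
      exact mul_le_one₀ hc1 (hv.nonneg y) (hv.le_one hΩ hn hp h1)
  · filter_upwards [hv.tendsto.eventually_le_const hε] with y hy _
    have h3 := mul_le_of_le_one_left (hv.nonneg y) hc1
    linarith [hv.nonneg (y + h)]

end IsPCapacitary

lemma isPCapacitary_exp {n : ℕ} {N : MinkowskiNorm n} {Ω : Set (En n)} (hΩ : IsOpen Ω)
    {p : ℝ} (hp : 1 < p) {u : En n → ℝ} (hC1 : ContDiffOn ℝ 1 u (closure Ω))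
    (hsol : IsWeakPSol N Ω p u) (hbc : ∀ x ∈ frontier Ω, u x = 0)
    (hlim : Tendsto u (cocompact (En n)) atTop) :
    IsPCapacitary N Ω p fun x => Real.exp (-u x / (p - 1)) where
  contDiffOn := ((hC1.mono subset_closure).neg.div_const _).exp
  continuousOn := Real.continuous_exp.comp_continuousOn (hC1.continuousOn.neg.div_const _)
  harmonic := isPHarmonicC1_exp hΩ hp (hC1.mono subset_closure) hsol
  nonneg _ := (Real.exp_pos _).le
  eq_one x hx := by simp [hbc x hx]
  tendsto := Real.tendsto_exp_atBot.comp
    ((tendsto_neg_atTop_atBot.comp hlim).atBot_div_const (sub_pos.2 hp))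

/-- One sided bounds of a function along inward directions at a boundary point control its
derivative there. -/
lemma fderiv_apply_le_of_mem_frontier {n : ℕ} {N : MinkowskiNorm n} {Ω : Set (En n)}
    (hΩ : IsOpen Ω) (hsb : HasSmoothBoundary Ω) {u : En n → ℝ} {x : En n} (hx : x ∈ frontier Ω)
    (hd : DifferentiableAt ℝ u x) {L : ℝ} (hL : 0 ≤ L) (h0 : ∀ y ∈ Ω, u x ≤ u y)
    (h1 : ∀ d, x + d ∈ Ω → u (x + d) - u x ≤ L * polarF N d) (d : En n) :
    fderiv ℝ u x d ≤ L * polarF N d := by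
  obtain ⟨f, hf, rfl, hf0⟩ := hsb
  have hfd : DifferentiableAt ℝ f x := hf.differentiable (by norm_num) x
  have hfx : f x = 0 := by
    refine le_antisymm (closure_minimal (fun y (hy : f y < 0) => hy.le)
      (isClosed_le hf.continuous continuous_const) hx.1) (not_lt.1 fun h => ?_)
    rw [frontier, hΩ.interior_eq] at hx
    exact hx.2 h
  have hin : ∀ d, fderiv ℝ f x d < 0 → ∀ᶠ t : ℝ in 𝓝[>] 0, x + t • d ∈ {x | f x < 0} := by
    intro d hdneg
    have hl : HasDerivAt (fun t : ℝ => f (x + t • d)) (fderiv ℝ f x d) 0 := by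
      have := hfd.hasFDerivAt.hasLineDerivAt d
      exact this
    have := hl.tendsto_slope_zero_right.eventually_lt_const hdneg
    filter_upwards [this, self_mem_nhdsWithin] with t ht ht0
    have ht0' : (0 : ℝ) < t := ht0
    simp only [zero_add, zero_smul, add_zero, hfx, sub_zero, smul_eq_mul] at ht
    exact (mul_neg_iff.1 ht).resolve_right (fun h => absurd h.1 (not_lt.2 (by positivity))) |>.2
  have hneg : ∀ d, fderiv ℝ f x d < 0 → fderiv ℝ u x d ≤ L * polarF N d := by
    intro d hdneg
    refine fderiv_apply_le_of_eventually hd ?_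
    filter_upwards [hin d hdneg, self_mem_nhdsWithin] with t ht ht0
    refine (h1 _ ht).trans ?_
    rw [mul_left_comm]
    exact mul_le_mul_of_nonneg_left (N.polarF_smul_le (mem_Ioi.1 ht0).le d) hL
  have hnonneg : ∀ d, fderiv ℝ f x d < 0 → 0 ≤ fderiv ℝ u x d := by
    intro d hdneg
    have h2 : fderiv ℝ (fun y => -u y) x d ≤ 0 := by
      refine fderiv_apply_le_of_eventually hd.neg ?_
      filter_upwards [hin d hdneg] with t ht
      linarith [h0 _ ht]
    rw [fderiv_fun_neg, neg_apply] at h2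
    linarith
  rcases lt_trichotomy (fderiv ℝ f x d) 0 with h | h | h
  · exact hneg d h
  · obtain ⟨d₀, hd₀⟩ : ∃ d₀, fderiv ℝ f x d₀ < 0 := by
      obtain ⟨e, he⟩ : ∃ e, fderiv ℝ f x e ≠ 0 := by
        by_contra! hcon
        exact hf0 x hx (ContinuousLinearMap.ext hcon)
      rcases lt_or_gt_of_ne he with he | he
      · exact ⟨e, he⟩
      · exact ⟨-e, by rw [map_neg]; linarith⟩
    have ht₁ : Tendsto (fun ε : ℝ => fderiv ℝ u x (d + ε • d₀)) (𝓝[>] 0) (𝓝 (fderiv ℝ u x d)) := by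
      have : Continuous fun ε : ℝ => fderiv ℝ u x (d + ε • d₀) := by fun_prop
      simpa using (this.tendsto 0).mono_left nhdsWithin_le_nhds
    have ht₂ : Tendsto (fun ε : ℝ => L * polarF N (d + ε • d₀)) (𝓝[>] 0)
        (𝓝 (L * polarF N d)) := by
      have : Continuous fun ε : ℝ => L * polarF N (d + ε • d₀) :=
        continuous_const.mul (N.continuous_polarF.comp (by fun_prop))
      simpa using (this.tendsto 0).mono_left nhdsWithin_le_nhds
    refine le_of_tendsto_of_tendsto ht₁ ht₂ ?_
    filter_upwards [self_mem_nhdsWithin] with ε hε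
    refine hneg _ ?_
    rw [map_add, h, map_smul, zero_add, smul_eq_mul]
    exact mul_neg_of_pos_of_neg hε hd₀
  · have h2 := hnonneg (-d) (by rw [map_neg]; linarith)
    rw [map_neg] at h2
    linarith [mul_nonneg hL (N.polarF_nonneg d)]

/-- Global gradient estimate: if `R > 0` is such that every boundary
point of `Ω` is touched from inside `Ωᶜ` by a Wulff shape of radius `R`, then
`F(∇u_p) ≤ (n-p)/R` on the closure of `Ω`. -/
theorem statement13 (n : ℕ) (N : MinkowskiNorm n)
    (Ω : Set (En n)) (hΩ : IsOpen Ω) (hsb : HasSmoothBoundary Ω)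
    (hbd : Bornology.IsBounded Ωᶜ)
    (p : ℝ) (hp1 : 1 < p) (hpn : p < n)
    (u : En n → ℝ) (hC1 : ContDiffOn ℝ 1 u (closure Ω))
    (hsol : IsWeakPSol N Ω p u)
    (hbc : ∀ x ∈ frontier Ω, u x = 0)
    (hlim : Tendsto u (cocompact (En n)) atTop)
    (R : ℝ) (hR : 0 < R)
    (htouch : ∀ x ∈ frontier Ω, ∃ x₀ : En n,
      Wulff N R x₀ ⊆ Ωᶜ ∧ x ∈ frontier (Wulff N R x₀)) :
    ∀ x ∈ closure Ω, N.F (gradient u x) ≤ (n - p) / R := by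
  have hp' : 0 < p - 1 := sub_pos.2 hp1
  have hL : 0 ≤ (n - p) / R := (div_pos (sub_pos.2 hpn) hR).le
  have hn : n ≠ 0 := by
    rintro rfl
    norm_num at hpn
    linarith
  have hv := isPCapacitary_exp hΩ hp1 hC1 hsol hbc hlim
  intro x hx
  refine N.F_le_of_inner_le hL fun d => ?_
  rw [inner_gradient_left]
  rcases mem_or_mem_frontier_of_mem_closure hx with h | h
  · have hd : DifferentiableAt ℝ u x :=
      ((hC1.mono subset_closure).contDiffAt (hΩ.mem_nhds h)).differentiableAt one_ne_zero
    refine fderiv_apply_le_of_eventually hd ?_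
    have hc : Tendsto (fun t : ℝ => x + t • d) (𝓝[>] 0) (𝓝 x) := by
      have : Continuous fun t : ℝ => x + t • d := by fun_prop
      simpa using (this.tendsto 0).mono_left nhdsWithin_le_nhds
    filter_upwards [hc.eventually (hΩ.eventually_mem h), self_mem_nhdsWithin] with t ht ht0
    have h1 := hv.exp_mul_le_add hΩ hp1 hpn hR htouch h ht
    rw [← Real.exp_add, Real.exp_le_exp, ← add_div, div_le_div_iff_of_pos_right hp'] at h1
    have h2 := mul_le_mul_of_nonneg_left (N.polarF_smul_le (mem_Ioi.1 ht0).le d) hL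
    linarith
  · by_cases hd : DifferentiableAt ℝ u x
    swap
    · rw [fderiv_zero_of_not_differentiableAt hd]
      exact mul_nonneg hL (N.polarF_nonneg d)
    refine fderiv_apply_le_of_mem_frontier hΩ hsb h hd hL (fun y hy => ?_) (fun e he => ?_) d
    · have h1 := hv.le_one hΩ hn hp1 (subset_closure hy)
      rw [Real.exp_le_one_iff, div_le_iff₀ hp', zero_mul] at h1
      rw [hbc x h]
      linarith
    · obtain ⟨x₀, hW, hx₀⟩ := htouch x h
      have h1 := hv.exp_le_of_mem_frontier hΩ hp1 hpn hR hW hx₀ (subset_closure he)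
      rw [Real.exp_le_exp, div_le_div_iff_of_pos_right hp'] at h1
      rw [hbc x h]
      linarith
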